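/- Let X be an algebraic hypersurface of PG(4,9) of degree 4 defined over GF(9), not containing any plane, whose number of GF(9)-rational points equals 3^7 + 3^5 + 3^2 + 1 (the number of points of the non-singular Hermitian variety H(4,9)). If there exists at least one plane of PG(4,9) meeting X in exactly 3^2 + 1 = 10 rational points, then X is a non-singular Hermitian variety H(4,9) of PG(4,9). -/

import Mathlib

open MvPolynomial Module

/-- The set of points of the projective subspace of `PG(n-1, F)` determined by
the linear subspace `W` of `F^n`. -/
def projPts {F : Type} [Field F] {n : ℕ} (W : Submodule F (Fin n → F)) :
    Set (Projectivization F (Fin n → F)) :=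
  {P | P.submodule ≤ W}

/-- The set of `F`-rational points of the hypersurface of `PG(n-1, F)` defined by the
homogeneous polynomial `f`. -/
def hypersurfacePts {F : Type} [Field F] {n : ℕ} (f : MvPolynomial (Fin n) F) :
    Set (Projectivization F (Fin n → F)) :=
  {P | MvPolynomial.eval P.rep f = 0}


/-- `S` is a non-singular Hermitian variety of `PG(n-1, q²)`: the set of points `⟨v⟩`
with `vᵀ M v^(q) = 0` for an invertible matrix `M` with `Mᵀ` the entrywise `q`-th
power of `M`. -/
def IsNonsingularHermitian (q : ℕ) {F : Type} [Field F] {n : ℕ}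
    (S : Set (Projectivization F (Fin n → F))) : Prop :=
  ∃ M : Matrix (Fin n) (Fin n) F, IsUnit M.det ∧ M.transpose = M.map (· ^ q) ∧
    S = {P | ∑ i, ∑ j, P.rep i * M i j * (P.rep j) ^ q = 0}

open scoped Finset

/-
Let `u` be a nonsingular zero of `f` with tangent form `L`; one exists because a quartic singular
at all of its zeros has too few of them. Regard `f(x + t u)` as a polynomial in `t`: on the
hyperplane `L = 0` it has degree at most two, and on `L = 1` it is the monic cubic
`t³ + Q(x) t² + K(x) t + f(x)`. Counting zeros along the lines with direction `u` shows that the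
base points of the lines contained in `f = 0` span `L = 0`, and that for all but at most 243 points
of `L = 1` this cubic splits with three distinct roots over the field with nine elements.

A split cubic satisfies polynomial relations between `Q`, `K` and `f`. Restricted to lines in the
directions `b` of the ruling, along which the degrees drop, they force `Q` and then `K` to be
constant on `L = 1`; moreover `Q = 0`, since otherwise `f` would vanish on `L = 0`. The relations
are then `f³ = K³ f` with `K³` constant, away from the exceptional points; interpolation along
lines extends this to all points. So a multiple of `f` takes values in the subfield with three
elements, and comparing derivatives turns it into a Hermitian form. Its matrix is invertible,
because a degenerate Hermitian form in five variables has a totally isotropic plane.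
-/

section LineRestriction

variable {σ R : Type*} [CommSemiring R] {f : MvPolynomial σ R} {k : ℕ}

theorem eval_smul_of_isHomogeneous (hf : f.IsHomogeneous k) (r : R) (v : σ → R) :
    eval (r • v) f = r ^ k * eval v f := by
  simp only [eval_eq, Finset.mul_sum, Pi.smul_apply, smul_eq_mul, mul_pow, Finset.prod_mul_distrib,
    Finset.prod_pow_eq_pow_sum]
  refine Finset.sum_congr rfl fun m hm => ?_
  rw [← hf.degree_eq_sum_deg_support hm]
  ring

/-- The restriction of `f` to the line through `x` with direction `d`: the univariate polynomial
in the parameter `r` that represents `r ↦ f (x + r • d)`. -/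
noncomputable def lineRestriction (f : MvPolynomial σ R) (x d : σ → R) : Polynomial R :=
  aeval (fun i => Polynomial.C (x i) + Polynomial.C (d i) * Polynomial.X) f

theorem eval_lineRestriction (f : MvPolynomial σ R) (x d : σ → R) (r : R) :
    (lineRestriction f x d).eval r = eval (x + r • d) f := by
  rw [lineRestriction, aeval_def, polynomial_eval_eval₂]
  simp [eval₂_eq, eval_eq, mul_comm r]

theorem natDegree_lineRestriction_le (hf : f.IsHomogeneous k) (x d : σ → R) :
    (lineRestriction f x d).natDegree ≤ k := by
  refine (aeval_natDegree_le f hf.totalDegree_le (n := 1) _ fun i => ?_).trans_eq (mul_one k)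
  compute_degree

theorem coeff_zero_lineRestriction (f : MvPolynomial σ R) (x d : σ → R) :
    (lineRestriction f x d).coeff 0 = eval x f := by
  rw [Polynomial.coeff_zero_eq_eval_zero, eval_lineRestriction, zero_smul, add_zero]

theorem reflect_prod {ι : Type*} (s : Finset ι) (p : ι → Polynomial R) (n : ι → ℕ)
    (h : ∀ i ∈ s, (p i).natDegree ≤ n i) :
    Polynomial.reflect (∑ i ∈ s, n i) (∏ i ∈ s, p i) =
      ∏ i ∈ s, Polynomial.reflect (n i) (p i) := by
  classical
  induction s using Finset.induction_on with
  | empty => simp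
  | insert a s ha ih =>
    have hs : ∀ i ∈ s, (p i).natDegree ≤ n i := fun i hi => h i (Finset.mem_insert_of_mem hi)
    rw [Finset.sum_insert ha, Finset.prod_insert ha, Finset.prod_insert ha,
      Polynomial.reflect_mul _ _ (h a (Finset.mem_insert_self a s))
        ((Polynomial.natDegree_prod_le s p).trans (Finset.sum_le_sum hs)), ih hs]

theorem reflect_linear_pow (a b : R) (n : ℕ) :
    Polynomial.reflect n ((Polynomial.C a + Polynomial.C b * Polynomial.X) ^ n) =
      (Polynomial.C b + Polynomial.C a * Polynomial.X) ^ n := by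
  have hlin : Polynomial.reflect 1 (Polynomial.C a + Polynomial.C b * Polynomial.X) =
      Polynomial.C b + Polynomial.C a * Polynomial.X := by
    rw [Polynomial.reflect_add, Polynomial.reflect_C, ← pow_one Polynomial.X,
      Polynomial.reflect_C_mul_X_pow, Polynomial.revAt_le le_rfl, pow_one]
    simp [add_comm]
  have hdeg : (Polynomial.C a + Polynomial.C b * Polynomial.X).natDegree ≤ 1 := by compute_degree
  simpa [hlin] using reflect_prod (Finset.range n)
    (fun _ => Polynomial.C a + Polynomial.C b * Polynomial.X) (fun _ => 1) fun _ _ => hdeg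

theorem reflect_lineRestriction (hf : f.IsHomogeneous k) (x d : σ → R) :
    Polynomial.reflect k (lineRestriction f x d) = lineRestriction f d x := by
  have reflect_monomial : ∀ m ∈ f.support, Polynomial.reflect k (Polynomial.C (coeff m f) *
      ∏ i ∈ m.support, (Polynomial.C (x i) + Polynomial.C (d i) * Polynomial.X) ^ m i) =
      Polynomial.C (coeff m f) *
        ∏ i ∈ m.support, (Polynomial.C (d i) + Polynomial.C (x i) * Polynomial.X) ^ m i := by
    intro m hm
    rw [Polynomial.reflect_C_mul, hf.degree_eq_sum_deg_support hm, reflect_prod]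
    · simp only [reflect_linear_pow]
    · intro i _
      compute_degree
  have reflect_sum (s : Finset (σ →₀ ℕ)) (p : (σ →₀ ℕ) → Polynomial R) :
      Polynomial.reflect k (∑ m ∈ s, p m) = ∑ m ∈ s, Polynomial.reflect k (p m) := by
    ext n
    simp only [Polynomial.coeff_reflect, Polynomial.finsetSum_coeff]
  simp only [lineRestriction, aeval_def, eval₂_eq, Polynomial.algebraMap_eq, reflect_sum]
  exact Finset.sum_congr rfl reflect_monomial

theorem coeff_lineRestriction_comm (hf : f.IsHomogeneous k) (x d : σ → R) {i j : ℕ}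
    (hij : i + j = k) : (lineRestriction f x d).coeff i = (lineRestriction f d x).coeff j := by
  rw [← reflect_lineRestriction hf x d, Polynomial.coeff_reflect, Polynomial.revAt_le (by omega)]
  congr 1
  omega

theorem coeff_top_lineRestriction (hf : f.IsHomogeneous k) (x d : σ → R) :
    (lineRestriction f x d).coeff k = eval d f := by
  rw [coeff_lineRestriction_comm hf x d (add_zero k), coeff_zero_lineRestriction]

theorem natDegree_lineRestriction_le_of_eval_eq_zero (hf : f.IsHomogeneous k) {d : σ → R}
    (hd : eval d f = 0) (x : σ → R) : (lineRestriction f x d).natDegree ≤ k - 1 :=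
  Polynomial.natDegree_le_pred (natDegree_lineRestriction_le hf x d)
    (by rw [coeff_top_lineRestriction hf, hd])

theorem eval_add_smul_eq_of_natDegree_lineRestriction_eq_zero {x d : σ → R}
    (h : (lineRestriction f x d).natDegree = 0) (r : R) : eval (x + r • d) f = eval x f := by
  rw [← eval_lineRestriction, Polynomial.eq_C_of_natDegree_eq_zero h, Polynomial.eval_C,
    coeff_zero_lineRestriction]

/-- The derivative of `f` in the direction `d`; for homogeneous `f` its zero locus is the first
polar of the point `d`. -/
noncomputable def dirDeriv [Fintype σ] (d : σ → R) (f : MvPolynomial σ R) : MvPolynomial σ R :=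
  ∑ i, C (d i) * pderiv i f

theorem eval_dirDeriv [Fintype σ] (f : MvPolynomial σ R) (x d : σ → R) :
    eval x (dirDeriv d f) = ∑ i, d i * eval x (pderiv i f) := by
  simp [dirDeriv]

theorem isHomogeneous_dirDeriv [Fintype σ] (hf : f.IsHomogeneous k) (d : σ → R) :
    (dirDeriv d f).IsHomogeneous (k - 1) :=
  IsHomogeneous.sum _ _ _ fun _ _ => hf.pderiv.C_mul _

theorem derivative_lineRestriction [Fintype σ] (f : MvPolynomial σ R) (x d : σ → R) :
    Polynomial.derivative (lineRestriction f x d) = lineRestriction (dirDeriv d f) x d := by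
  classical
  suffices h : Polynomial.derivative (lineRestriction f x d) =
      ∑ i, Polynomial.C (d i) * lineRestriction (pderiv i f) x d by
    simpa [lineRestriction, dirDeriv] using h
  induction f using MvPolynomial.induction_on with
  | C a => simp [lineRestriction]
  | add p q hp hq => simp_all [lineRestriction, mul_add, Finset.sum_add_distrib]
  | mul_X p j hp =>
    set ℓ : Polynomial R := Polynomial.C (x j) + Polynomial.C (d j) * Polynomial.X with hℓ
    have line_mul : lineRestriction (p * X j) x d = lineRestriction p x d * ℓ := by
      simp [lineRestriction, hℓ]
    have line_pderiv_mul (i : σ) : lineRestriction (pderiv i (p * X j)) x d =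
        lineRestriction (pderiv i p) x d * ℓ + if i = j then lineRestriction p x d else 0 := by
      rcases eq_or_ne i j with rfl | hij <;> simp [lineRestriction, pderiv_X, *] <;> ring
    simp only [line_mul, line_pderiv_mul, Polynomial.derivative_mul, hp, mul_add,
      Finset.sum_add_distrib, Finset.sum_mul, ← mul_assoc]
    congr 1
    have derivative_line : Polynomial.derivative ℓ = Polynomial.C (d j) := by simp [hℓ]
    rw [derivative_line, mul_comm]
    simp

theorem coeff_one_lineRestriction [Fintype σ] (f : MvPolynomial σ R) (x d : σ → R) :
    (lineRestriction f x d).coeff 1 = eval x (dirDeriv d f) := by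
  have h := congr_arg (Polynomial.coeff · 0) (derivative_lineRestriction f x d)
  simpa [Polynomial.coeff_derivative, coeff_zero_lineRestriction] using h

theorem two_mul_coeff_two_lineRestriction [Fintype σ] (f : MvPolynomial σ R) (x d : σ → R) :
    2 * (lineRestriction f x d).coeff 2 = eval x (dirDeriv d (dirDeriv d f)) := by
  have h := congr_arg (Polynomial.coeff · 1) (derivative_lineRestriction f x d)
  simpa [Polynomial.coeff_derivative, coeff_one_lineRestriction, one_add_one_eq_two, mul_comm]
    using h

end LineRestriction

section FrobeniusReduction

variable {F : Type*} [Field F] {q : ℕ}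

/-- For `P` of degree at most `q + 1`, the polynomial of degree less than `q²` which takes the
values `P(r) ^ q` on the field with `q²` elements; it is obtained by reducing the exponents of
`∑ pᵢ ^ q X ^ (q * i)` modulo `q² - 1`. -/
noncomputable def frobeniusReduction (q : ℕ) (P : Polynomial F) : Polynomial F :=
  ∑ i ∈ Finset.range q, Polynomial.C (P.coeff i ^ q) * Polynomial.X ^ (q * i) +
    Polynomial.C (P.coeff q ^ q) * Polynomial.X +
    Polynomial.C (P.coeff (q + 1) ^ q) * Polynomial.X ^ (q + 1)

theorem natDegree_frobeniusReduction_le (q : ℕ) (P : Polynomial F) :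
    (frobeniusReduction q P).natDegree ≤ max (q * (q - 1)) (q + 1) := by
  refine Polynomial.natDegree_add_le_of_degree_le (Polynomial.natDegree_add_le_of_degree_le
    (Polynomial.natDegree_sum_le_of_forall_le _ _ fun i hi => ?_) ?_) ?_
  · have hi' : i ≤ q - 1 := Nat.le_sub_one_of_lt (Finset.mem_range.1 hi)
    exact (Polynomial.natDegree_C_mul_X_pow_le _ _).trans
      ((Nat.mul_le_mul_left q hi').trans (le_max_left _ _))
  · exact (Polynomial.natDegree_C_mul_le _ _).trans
      (Polynomial.natDegree_X_le.trans ((Nat.le_add_left 1 q).trans (le_max_right _ _)))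
  · exact (Polynomial.natDegree_C_mul_X_pow_le _ _).trans (le_max_right _ _)

theorem coeff_one_frobeniusReduction (hq : 2 ≤ q) (P : Polynomial F) :
    (frobeniusReduction q P).coeff 1 = P.coeff q ^ q := by
  have hne (i : ℕ) : 1 ≠ q * i := fun h => by
    have := Nat.eq_one_of_mul_eq_one_right h.symm
    omega
  simp only [frobeniusReduction, Polynomial.coeff_add, Polynomial.finsetSum_coeff,
    Polynomial.coeff_C_mul, Polynomial.coeff_X_pow, Polynomial.coeff_X_one, hne, if_false]
  simp [show q ≠ 0 by omega]

end FrobeniusReduction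

section FiniteField

variable {F : Type*} [Field F] [Fintype F] {q : ℕ}

theorem two_le_of_card_eq_sq (hF : Fintype.card F = q ^ 2) : 2 ≤ q := by
  have := hF ▸ Fintype.one_lt_card (α := F)
  by_contra! hq
  interval_cases q <;> simp_all

theorem pow_pow_self_of_card_eq_sq (hF : Fintype.card F = q ^ 2) (x : F) : (x ^ q) ^ q = x := by
  rw [← pow_mul, ← sq, ← hF, FiniteField.pow_card]

theorem add_pow_of_card_eq_sq (hF : Fintype.card F = q ^ 2) (x y : F) :
    (x + y) ^ q = x ^ q + y ^ q := by
  obtain ⟨p, _, n, hp, hcard⟩ := FiniteField.card' F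
  obtain ⟨m, -, rfl⟩ := (Nat.dvd_prime_pow hp).1 (hcard ▸ hF ▸ dvd_pow_self q two_ne_zero)
  have : Fact p.Prime := ⟨hp⟩
  exact add_pow_char_pow x y p m

/-- The involution `x ↦ x ^ q` of a field with `q²` elements. -/
def powInvolution (hF : Fintype.card F = q ^ 2) : F →+* F where
  toFun x := x ^ q
  map_one' := one_pow q
  map_mul' x y := mul_pow x y q
  map_zero' := zero_pow (by have := two_le_of_card_eq_sq hF; omega)
  map_add' := add_pow_of_card_eq_sq hF

theorem powInvolution_apply (hF : Fintype.card F = q ^ 2) (x : F) : powInvolution hF x = x ^ q :=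
  rfl

theorem exists_pow_succ_eq_of_pow_eq (hF : Fintype.card F = q ^ 2) {a : F} (ha : a ^ q = a) :
    ∃ z : F, z ^ (q + 1) = a := by
  have hq := two_le_of_card_eq_sq hF
  rcases eq_or_ne a 0 with rfl | ha0
  · exact ⟨0, zero_pow q.succ_ne_zero⟩
  obtain ⟨g, hg⟩ := IsCyclic.exists_generator (α := Fˣ)
  obtain ⟨k, hk : g ^ k = Units.mk0 a ha0⟩ :=
    mem_powers_iff_mem_zpowers.2 (hg (Units.mk0 a ha0))
  have horder : orderOf g = (q + 1) * (q - 1) := by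
    rw [orderOf_eq_card_of_forall_mem_zpowers hg, Nat.card_units, Nat.card_eq_fintype_card, hF,
      ← Nat.sq_sub_sq, one_pow]
  have hdvd : (q + 1) * (q - 1) ∣ k * (q - 1) := by
    rw [← horder, orderOf_dvd_iff_pow_eq_one, pow_mul, hk]
    ext
    rw [Units.val_pow_eq_pow_val, Units.val_mk0, Units.val_one]
    refine mul_right_cancel₀ ha0 ?_
    rw [← pow_succ, Nat.sub_add_cancel (by omega), ha, one_mul]
  obtain ⟨m, rfl⟩ := Nat.dvd_of_mul_dvd_mul_right (by omega) hdvd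
  exact ⟨(g ^ m : Fˣ), by rw [← Units.val_pow_eq_pow_val, ← pow_mul, mul_comm, hk, Units.val_mk0]⟩

theorem card_eval_eq_zero_le [DecidableEq F] {P : Polynomial F} (hP : P ≠ 0) {k : ℕ}
    (hk : P.natDegree ≤ k) : #{t : F | P.eval t = 0} ≤ k := by
  have : ({t : F | P.eval t = 0} : Finset F) = P.roots.toFinset := by
    ext t; simp [hP]
  rw [this]
  exact (Multiset.toFinset_card_le _).trans ((Polynomial.card_roots' P).trans hk)

theorem eval_frobeniusReduction (hF : Fintype.card F = q ^ 2) {P : Polynomial F}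
    (hP : P.natDegree ≤ q + 1) (r : F) : (frobeniusReduction q P).eval r = P.eval r ^ q := by
  have hrq : (r ^ q) ^ q = r := pow_pow_self_of_card_eq_sq hF r
  have hrq' : (r ^ q) ^ (q + 1) = r ^ (q + 1) := by rw [pow_succ, hrq, pow_succ, mul_comm]
  rw [Polynomial.eval_eq_sum_range' (p := P) (n := q + 2) (by omega) r,
    ← powInvolution_apply hF, map_sum]
  simp only [powInvolution_apply, mul_pow, Finset.sum_range_succ, hrq, hrq', frobeniusReduction,
    Polynomial.eval_add, Polynomial.eval_finsetSum, Polynomial.eval_mul, Polynomial.eval_C,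
    Polynomial.eval_pow, Polynomial.eval_X, pow_mul, pow_right_comm r]

theorem coeff_q_eq_coeff_one_pow (hF : Fintype.card F = q ^ 2) {P : Polynomial F}
    (hP : P.natDegree ≤ q + 1) (hval : ∀ r, P.eval r ^ q = P.eval r) :
    P.coeff q = P.coeff 1 ^ q := by
  have hq := two_le_of_card_eq_sq hF
  have hlt : max (q * (q - 1)) (q + 1) < q ^ 2 := by
    obtain ⟨m, rfl⟩ := Nat.exists_eq_add_of_le hq
    rw [show 2 + m - 1 = m + 1 by omega]
    exact max_lt (by nlinarith) (by nlinarith)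
  have hred : frobeniusReduction q P = P := by
    refine Polynomial.eq_of_natDegree_lt_card_of_eval_eq _ _ (f := (id : F → F))
      Function.injective_id (fun r => ?_) ?_
    · rw [id, eval_frobeniusReduction hF hP, hval]
    · rw [hF]
      exact max_lt ((natDegree_frobeniusReduction_le q P).trans_lt hlt)
        ((hP.trans (le_max_right _ _)).trans_lt hlt)
  rw [← hred, coeff_one_frobeniusReduction hq, hred, pow_pow_self_of_card_eq_sq hF]

end FiniteField

section HermitianCoefficients

variable {F σ : Type*} [Field F] [Fintype F] [Fintype σ] {q : ℕ} {h : MvPolynomial σ F}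

theorem cast_eq_zero_of_card_eq_sq (hF : Fintype.card F = q ^ 2) : (q : F) = 0 := by
  have hcast : ((q : F)) ^ 2 = 0 := by exact_mod_cast hF ▸ FiniteField.cast_card_eq_zero F
  exact pow_eq_zero_iff two_ne_zero |>.1 hcast

theorem eval_dirDeriv_pow_eq_swap (hF : Fintype.card F = q ^ 2) (hh : h.IsHomogeneous (q + 1))
    (hval : ∀ v, eval v h ^ q = eval v h) (x y : σ → F) :
    eval x (dirDeriv y h) ^ q = eval y (dirDeriv x h) := by
  rw [← coeff_one_lineRestriction, ← coeff_one_lineRestriction,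
    ← coeff_lineRestriction_comm hh x y rfl]
  refine (coeff_q_eq_coeff_one_pow hF (natDegree_lineRestriction_le hh x y) fun r => ?_).symm
  rw [eval_lineRestriction, hval]

theorem eval_eq_sum_mul_eval_pderiv (hF : Fintype.card F = q ^ 2) (hh : h.IsHomogeneous (q + 1))
    (v : σ → F) : eval v h = ∑ i, v i * eval v (pderiv i h) := by
  simpa [cast_eq_zero_of_card_eq_sq hF] using (congr_arg (eval v) hh.sum_X_mul_pderiv).symm

theorem exists_hermitian_matrix (hF : Fintype.card F = q ^ 2)
    (hh : h.IsHomogeneous (q + 1)) (hval : ∀ v, eval v h ^ q = eval v h) :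
    ∃ M : Matrix σ σ F, M.transpose = M.map (· ^ q) ∧
      ∀ v, eval v h = ∑ i, ∑ j, v i * M i j * v j ^ q := by
  classical
  let M : Matrix σ σ F := Matrix.of fun i j => eval (Pi.single j 1) (pderiv i h)
  have pderiv_pow (v : σ → F) (i : σ) : eval v (pderiv i h) ^ q = ∑ j, v j * M j i := by
    simpa [eval_dirDeriv, Pi.single_apply, M] using
      eval_dirDeriv_pow_eq_swap hF hh hval v (Pi.single i 1)
  have hM (i j : σ) : M i j ^ q = M j i :=
    (pderiv_pow (Pi.single j 1) i).trans (by simp [Pi.single_apply])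
  refine ⟨M, Matrix.ext fun i j => (hM i j).symm, fun v => ?_⟩
  rw [eval_eq_sum_mul_eval_pderiv hF hh]
  refine Finset.sum_congr rfl fun i _ => ?_
  have expand_pderiv : eval v (pderiv i h) = ∑ j, M i j * v j ^ q := by
    rw [← pow_pow_self_of_card_eq_sq hF (eval v (pderiv i h)), pderiv_pow,
      ← powInvolution_apply hF, map_sum]
    simp only [powInvolution_apply, mul_pow, hM, mul_comm]
  simp only [expand_pderiv, Finset.mul_sum, mul_assoc]

end HermitianCoefficients

theorem finrank_le_finrank_inf_ker_add_one {F V : Type*} [Field F] [AddCommGroup V] [Module F V]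
    [FiniteDimensional F V] (W : Submodule F V) (ℓ : V →ₗ[F] F) :
    finrank F W ≤ finrank F (W ⊓ LinearMap.ker ℓ : Submodule F V) + 1 := by
  have hsup := Submodule.finrank_sup_add_finrank_inf_eq W (LinearMap.ker ℓ)
  have hsup_le := (W ⊔ LinearMap.ker ℓ).finrank_le
  have hker := ℓ.finrank_range_add_finrank_ker
  have hrange := (LinearMap.range ℓ).finrank_le
  rw [finrank_self] at hrange
  omega

section HermitianForms

variable {F V : Type*} [Field F] [AddCommGroup V] [Module F V] {σ : F →+* F}
  {B : V →ₛₗ[σ] V →ₗ[F] F}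

theorem exists_isotropic_of_one_lt_finrank (hB : B.IsSymm)
    (hnorm : ∀ a, σ a = a → ∃ y, y * σ y = a) {W : Submodule F V} (hW : 1 < finrank F W) :
    ∃ w ∈ W, w ≠ 0 ∧ B w w = 0 := by
  have : Nontrivial W := Module.nontrivial_of_finrank_pos (R := F) (by omega)
  obtain ⟨w₁, hw₁⟩ := exists_ne (0 : W)
  obtain ⟨w₂, hli⟩ := exists_linearIndependent_pair_of_one_lt_finrank hW hw₁
  have hne (z : F) : w₂ + z • w₁ ≠ 0 := fun h => by
    simpa using (LinearIndependent.pair_iff.1 hli z 1 (by rw [one_smul, add_comm, h])).2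
  rcases eq_or_ne (B w₁ w₁) 0 with hD | hD
  · exact ⟨w₁, w₁.2, by simpa using hw₁, hD⟩
  have hsymm (x y : V) : σ (B x y) = B y x := hB.eq x y
  obtain ⟨y, hy⟩ := hnorm (B w₁ w₂ * B w₂ w₁ - B w₁ w₁ * B w₂ w₂)
    (by simp only [map_sub, map_mul, hsymm]; ring)
  refine ⟨w₂ + ((y - B w₁ w₂) / B w₁ w₁) • w₁, W.add_mem w₂.2 (W.smul_mem _ w₁.2),
    by simpa using Subtype.coe_ne_coe.2 (hne ((y - B w₁ w₂) / B w₁ w₁)), ?_⟩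
  simp only [map_add, LinearMap.add_apply, map_smulₛₗ, LinearMap.smul_apply, map_div₀, map_sub,
    hsymm, smul_eq_mul, RingHom.id_apply]
  field_simp
  linear_combination hy

theorem exists_totally_isotropic_of_radical (hB : B.IsSymm)
    (hnorm : ∀ a, σ a = a → ∃ y, y * σ y = a) (hV : 5 ≤ finrank F V) {u v : V} (hu : u ≠ 0)
    (hrad : B u = 0) (hv : B v v = 0) (huv : v ∉ Submodule.span F {u}) :
    ∃ W : Submodule F V, finrank F W = 3 ∧ ∀ w ∈ W, B w w = 0 := by
  have : FiniteDimensional F V := FiniteDimensional.of_finrank_pos (by omega)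
  have hrad' (x : V) : B x u = 0 := hB.eq_iff.1 (by rw [hrad, LinearMap.zero_apply])
  set P : Submodule F V := Submodule.span F {u} ⊔ Submodule.span F {v} with hP
  have hPrank : finrank F P = 2 := by
    rw [hP, Submodule.finrank_sup_span_singleton huv, finrank_span_singleton hu]
  obtain ⟨T, hT⟩ := exists_isCompl P
  have hTrank : 1 < finrank F (T ⊓ LinearMap.ker (B v) : Submodule F V) := by
    have := Submodule.finrank_add_eq_of_isCompl hT
    have := finrank_le_finrank_inf_ker_add_one T (B v)
    omega
  obtain ⟨w, hwT, hw0, hw⟩ := exists_isotropic_of_one_lt_finrank hB hnorm hTrank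
  have hvw : B v w = 0 := hwT.2
  have hwP : w ∉ P := fun hwP => hw0 (Submodule.disjoint_def.1 hT.disjoint w hwP hwT.1)
  refine ⟨P ⊔ Submodule.span F {w}, ?_, fun x hx => ?_⟩
  · rw [Submodule.finrank_sup_span_singleton hwP, hPrank]
  · simp only [hP, Submodule.mem_sup, Submodule.mem_span_singleton] at hx
    obtain ⟨_, ⟨_, ⟨a, rfl⟩, _, ⟨b, rfl⟩, rfl⟩, _, ⟨c, rfl⟩, rfl⟩ := hx
    simp [hrad, hrad', hv, hw, hvw, hB.eq_iff.1 hvw]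

end HermitianForms

section HermitianMatrices

variable {F n : Type*} [Field F] [Fintype F] [Fintype n] [DecidableEq n] {q : ℕ}
  {M : Matrix n n F}

/-- The sesquilinear form with Gram matrix `M` over the field with `q²` elements. The conjugate
variable comes first, as Mathlib's forms are linear in the second variable; this is why `M` is
transposed. -/
noncomputable def hermitianForm (hF : Fintype.card F = q ^ 2) (M : Matrix n n F) :
    (n → F) →ₛₗ[powInvolution hF] (n → F) →ₗ[F] F :=
  Matrix.toLinearMapₛₗ₂' F (powInvolution hF) (RingHom.id F) M.transpose

theorem hermitianForm_apply (hF : Fintype.card F = q ^ 2) (x y : n → F) :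
    hermitianForm hF M x y = ∑ i, ∑ j, y i * M i j * x j ^ q := by
  rw [hermitianForm, Matrix.toLinearMapₛₗ₂'_apply, Finset.sum_comm]
  exact Finset.sum_congr rfl fun i _ => Finset.sum_congr rfl fun j _ => by
    rw [powInvolution_apply, RingHom.id_apply, Matrix.transpose_apply, smul_eq_mul, smul_eq_mul]
    ring

theorem hermitianForm_isSymm (hF : Fintype.card F = q ^ 2) (hM : M.transpose = M.map (· ^ q)) :
    (hermitianForm hF M).IsSymm := by
  refine ⟨fun x y => ?_⟩
  have hM' (i j : n) : M i j ^ q = M j i := (congr_fun (congr_fun hM i) j).symm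
  simp only [hermitianForm_apply, map_sum, map_mul, map_pow]
  simp only [powInvolution_apply, pow_pow_self_of_card_eq_sq hF, hM']
  rw [Finset.sum_comm]
  exact Finset.sum_congr rfl fun i _ => Finset.sum_congr rfl fun j _ => by ring

theorem exists_hermitianForm_eq_zero_of_det_eq_zero (hF : Fintype.card F = q ^ 2)
    (hdet : M.det = 0) : ∃ u ≠ 0, hermitianForm hF M u = 0 := by
  have hq := two_le_of_card_eq_sq hF
  obtain ⟨y, hy0, hy⟩ := Matrix.exists_mulVec_eq_zero_iff.2 hdet
  refine ⟨fun j => y j ^ q, fun h => hy0 (funext fun j => ?_), LinearMap.ext fun v => ?_⟩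
  · exact pow_eq_zero_iff (by omega) |>.1 (congr_fun h j)
  · simp only [hermitianForm_apply, pow_pow_self_of_card_eq_sq hF, mul_assoc, ← Finset.mul_sum]
    exact Finset.sum_eq_zero fun i _ => by
      rw [show ∑ j, M i j * y j = 0 from congr_fun hy i, mul_zero]

theorem isUnit_det_of_no_totally_isotropic (hF : Fintype.card F = q ^ 2)
    (hM : M.transpose = M.map (· ^ q)) (hn : 5 ≤ Fintype.card n)
    (hisotropic : q ^ 2 < {v | hermitianForm hF M v v = 0}.ncard)
    (hW : ¬ ∃ W : Submodule F (n → F), finrank F W = 3 ∧ ∀ w ∈ W, hermitianForm hF M w w = 0) :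
    IsUnit M.det := by
  rw [isUnit_iff_ne_zero]
  intro hdet
  obtain ⟨u, hu, hrad⟩ := exists_hermitianForm_eq_zero_of_det_eq_zero hF hdet
  have hspan : (Submodule.span F {u} : Set (n → F)).ncard = q ^ 2 := by
    rw [← Nat.card_coe_set_eq, SetLike.coe_sort_coe, Module.natCard_eq_pow_finrank (K := F),
      finrank_span_singleton hu, Nat.card_eq_fintype_card, hF, pow_one]
  obtain ⟨v, hv, huv⟩ := Set.exists_mem_notMem_of_ncard_lt_ncard (hspan ▸ hisotropic)
  have hnorm (a : F) (ha : powInvolution hF a = a) : ∃ y, y * powInvolution hF y = a := by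
    obtain ⟨y, rfl⟩ := exists_pow_succ_eq_of_pow_eq hF ha
    exact ⟨y, (pow_succ' y q).symm⟩
  exact hW (exists_totally_isotropic_of_radical (hermitianForm_isSymm hF hM) hnorm
    (by rwa [finrank_fintype_fun_eq_card]) hu hrad hv huv)

end HermitianMatrices

section Counting

variable {F : Type*} [Field F] [Fintype F] [DecidableEq F]

theorem two_mul_card_roots_le {P : Polynomial F} (hP : P ≠ 0)
    (hroot : ∀ t, P.eval t = 0 → P.derivative.eval t = 0) :
    2 * #{t : F | P.eval t = 0} ≤ P.natDegree := by
  have hroots : ({t : F | P.eval t = 0} : Finset F) = P.roots.toFinset := by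
    ext t
    simp [hP]
  have hmult : ∀ t ∈ P.roots.toFinset, 2 ≤ P.roots.count t := by
    intro t ht
    have ht : P.IsRoot t := Polynomial.isRoot_of_mem_roots (Multiset.mem_toFinset.1 ht)
    rw [Polynomial.count_roots]
    exact (Polynomial.one_lt_rootMultiplicity_iff_isRoot hP).2 ⟨ht, hroot t ht⟩
  calc 2 * #{t : F | P.eval t = 0} = ∑ _t ∈ P.roots.toFinset, 2 := by
        rw [hroots, Finset.sum_const, smul_eq_mul, mul_comm]
    _ ≤ ∑ t ∈ P.roots.toFinset, P.roots.count t := Finset.sum_le_sum hmult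
    _ = Multiset.card P.roots := Multiset.toFinset_sum_count_eq _
    _ ≤ P.natDegree := Polynomial.card_roots' P

theorem sum_card_eval_map_eq_zero_le {P : Polynomial (Polynomial F)} (hP : P ≠ 0) {k : ℕ}
    (hk : P.leadingCoeff.natDegree + P.natDegree ≤ k) :
    ∑ r, #{t : F | (P.map (Polynomial.evalRingHom r)).eval t = 0} ≤ k * Fintype.card F := by
  have hfiber (r : F) : #{t : F | (P.map (Polynomial.evalRingHom r)).eval t = 0} ≤
      P.natDegree + if P.leadingCoeff.eval r = 0 then Fintype.card F else 0 := by
    split_ifs with hr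
    · exact (Finset.card_le_univ _).trans (Nat.le_add_left _ _)
    · refine card_eval_eq_zero_le (fun h0 => hr ?_) Polynomial.natDegree_map_le
      simpa using congr_arg (Polynomial.coeff · P.natDegree) h0
  calc _ ≤ ∑ r : F, (P.natDegree + if P.leadingCoeff.eval r = 0 then Fintype.card F else 0) :=
        Finset.sum_le_sum fun r _ => hfiber r
    _ = (#{r : F | P.leadingCoeff.eval r = 0} + P.natDegree) * Fintype.card F := by
        rw [Finset.sum_add_distrib, ← Finset.sum_filter]
        simp only [Finset.sum_const, Finset.card_univ, smul_eq_mul]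
        ring
    _ ≤ k * Fintype.card F := Nat.mul_le_mul_right _ <| (Nat.add_le_add_right
        (card_eval_eq_zero_le (Polynomial.leadingCoeff_ne_zero.2 hP) le_rfl) _).trans hk

end Counting

section Translation

variable {F V : Type*} [Field F] [Fintype F] [AddCommGroup V] [Module F V]

theorem sum_sum_add_smul (n : V → ℕ) {S : Finset V} {b : V}
    (hS : ∀ (r : F) (x : V), x + r • b ∈ S ↔ x ∈ S) :
    ∑ x ∈ S, ∑ r : F, n (x + r • b) = Fintype.card F * ∑ x ∈ S, n x := by
  have htranslate (r : F) : ∑ x ∈ S, n (x + r • b) = ∑ x ∈ S, n x :=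
    Finset.sum_equiv (Equiv.addRight (r • b)) (fun x => (hS r x).symm) fun _ _ => rfl
  rw [Finset.sum_comm, Finset.sum_congr rfl fun r _ => htranslate r, Finset.sum_const,
    Finset.card_univ, smul_eq_mul]

/-- The union of the lines with direction `b` which meet `E`. -/
def strip (F : Type*) [Field F] [Fintype F] [Module F V] [DecidableEq V] (E : Finset V) (b : V) :
    Finset V :=
  (E ×ˢ (Finset.univ : Finset F)).image fun p => p.1 + p.2 • b

theorem card_strip_le [DecidableEq V] (E : Finset V) (b : V) :
    #(strip F E b) ≤ Fintype.card F * #E := by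
  refine Finset.card_image_le.trans_eq ?_
  rw [Finset.card_product, Finset.card_univ, mul_comm]

theorem add_smul_notMem_of_notMem_strip [DecidableEq V] {E : Finset V} {b x : V}
    (hx : x ∉ strip F E b) (r : F) : x + r • b ∉ E := fun hE =>
  hx <| Finset.mem_image.2 ⟨(x + r • b, -r), Finset.mk_mem_product hE (Finset.mem_univ _), by simp⟩

theorem exists_direction_few_hits [Finite V] [DecidableEq V] [DecidableEq F] (W : Submodule F V)
    (S : Finset V) (x₀ : V) {m : ℕ}
    (h : (Fintype.card F - 1) * #S < (m + 1) * Nat.card W) :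
    ∃ d ∈ W, #{r : F | r ≠ 0 ∧ x₀ + r • d ∈ S} ≤ m := by
  have := Fintype.ofFinite W
  by_contra! hmany
  refine h.not_ge ?_
  have hscaled (r : F) (hr : r ≠ 0) : #{d : W | x₀ + r • (d : V) ∈ S} ≤ #S :=
    Finset.card_le_card_of_injOn (fun d => x₀ + r • (d : V)) (fun d hd => by simpa using hd)
      fun d _ d' _ hdd' => Subtype.ext (smul_right_injective V hr (add_left_cancel hdd'))
  calc (m + 1) * Nat.card W = ∑ _d : W, (m + 1) := by
        rw [Finset.sum_const, Finset.card_univ, Nat.card_eq_fintype_card, smul_eq_mul, mul_comm]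
    _ ≤ ∑ d : W, #{r ∈ ({0}ᶜ : Finset F) | x₀ + r • (d : V) ∈ S} := by
        refine Finset.sum_le_sum fun d _ => (hmany d d.2).trans_eq (congr_arg _ ?_)
        ext r
        simp
    _ = ∑ r ∈ ({0}ᶜ : Finset F), #{d : W | x₀ + r • (d : V) ∈ S} :=
        Finset.sum_card_bipartiteAbove_eq_sum_card_bipartiteBelow _
    _ ≤ ∑ _r ∈ ({0}ᶜ : Finset F), #S :=
        Finset.sum_le_sum fun r hr => hscaled r (by simpa using hr)
    _ = (Fintype.card F - 1) * #S := by
        rw [Finset.sum_const, Finset.card_compl, Finset.card_singleton, smul_eq_mul]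

end Translation

section LevelSets

variable {F V : Type*} [Field F] [DecidableEq F] [AddCommGroup V] [Module F V] [Fintype V]
  {L : V →ₗ[F] F}

theorem card_level_eq_card_ker (hL : L ≠ 0) (a : F) :
    #{x | L x = a} = Nat.card (LinearMap.ker L) := by
  obtain ⟨y, hy⟩ := LinearMap.surjective hL a
  calc #{x | L x = a} = #{x | L x = 0} :=
        Finset.card_equiv (Equiv.subRight y) fun x => by simp [hy, sub_eq_zero]
    _ = Nat.card (LinearMap.ker L) := (Nat.subtype_card _ fun x => by simp).symm

theorem sum_eq_sum_ker_add_mul_sum_level_one [Fintype F] (L : V →ₗ[F] F) (n : V → ℕ)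
    (hn : ∀ r : F, r ≠ 0 → ∀ x, n (r • x) = n x) :
    ∑ x, n x = ∑ x with L x = 0, n x + (Fintype.card F - 1) * ∑ x with L x = 1, n x := by
  have hlevel (a : F) (ha : a ≠ 0) : ∑ x with L x = a, n x = ∑ x with L x = 1, n x :=
    Finset.sum_equiv (MulAction.toPerm (Units.mk0 a ha)⁻¹)
      (fun x => by simp [Units.smul_def, inv_mul_eq_one₀ ha, eq_comm (a := a)])
      fun x _ => by simp [Units.smul_def, hn a⁻¹ (inv_ne_zero ha)]
  rw [← Finset.sum_fiberwise _ L, Fintype.sum_eq_add_sum_compl 0,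
    Finset.sum_congr rfl fun a ha => hlevel a (by simpa using ha), Finset.sum_const,
    Finset.card_compl, Finset.card_singleton, smul_eq_mul]

end LevelSets

section LineCount

variable {F σ : Type*} [Field F] [Fintype F] [DecidableEq F] {f : MvPolynomial σ F} {k : ℕ}

/-- The number of zeros of `f` on the affine line through `x` with direction `u`. -/
noncomputable def lineCount (f : MvPolynomial σ F) (u x : σ → F) : ℕ :=
  #{t : F | eval (x + t • u) f = 0}

theorem lineCount_smul (hf : f.IsHomogeneous k) (u : σ → F) {r : F} (hr : r ≠ 0) (x : σ → F) :
    lineCount f u (r • x) = lineCount f u x := by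
  refine (Finset.card_equiv (Equiv.mulLeft₀ r hr) fun t => ?_).symm
  simp [mul_smul, ← smul_add, eval_smul_of_isHomogeneous hf, hr]

theorem lineCount_le {u x : σ → F} (hne : lineRestriction f x u ≠ 0)
    (hdeg : (lineRestriction f x u).natDegree ≤ k) : lineCount f u x ≤ k := by
  simpa only [lineCount, eval_lineRestriction] using card_eval_eq_zero_le hne hdeg

variable [Fintype σ] [DecidableEq σ]

theorem sum_lineCount (f : MvPolynomial σ F) (u : σ → F) :
    ∑ x, lineCount f u x = Fintype.card F * #{x | eval x f = 0} := by
  simp only [lineCount, Finset.card_filter]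
  exact sum_sum_add_smul (fun x => if eval x f = 0 then 1 else 0) (by simp)

theorem two_mul_card_zeros_le_of_forall_singular (hf : f.IsHomogeneous k) {v : σ → F}
    (hv : eval v f ≠ 0) (hsing : ∀ x, eval x f = 0 → ∀ i, eval x (pderiv i f) = 0) :
    2 * (Fintype.card F * #{x | eval x f = 0}) ≤ k * Fintype.card F ^ Fintype.card σ := by
  have hline (x : σ → F) : 2 * lineCount f v x ≤ k := by
    have hne : lineRestriction f x v ≠ 0 := fun h0 => hv <| by
      rw [← coeff_top_lineRestriction hf x v, h0, Polynomial.coeff_zero]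
    simp only [lineCount, ← eval_lineRestriction]
    refine (two_mul_card_roots_le hne fun r hr => ?_).trans (natDegree_lineRestriction_le hf x v)
    rw [eval_lineRestriction] at hr
    simp [derivative_lineRestriction, eval_lineRestriction, eval_dirDeriv, hsing _ hr]
  calc 2 * (Fintype.card F * #{x | eval x f = 0}) = ∑ x : σ → F, 2 * lineCount f v x := by
        rw [← sum_lineCount, Finset.mul_sum]
    _ ≤ ∑ _x : σ → F, k := Finset.sum_le_sum fun x _ => hline x
    _ = k * Fintype.card F ^ Fintype.card σ := by
        rw [Finset.sum_const, Finset.card_univ, Fintype.card_fun, smul_eq_mul, mul_comm]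

end LineCount

section HypersurfacePoints

variable {F : Type} [Field F] {n k : ℕ} {f : MvPolynomial (Fin n) F}

theorem mk_mem_hypersurfacePts_iff (hf : f.IsHomogeneous k) {v : Fin n → F} (hv : v ≠ 0) :
    Projectivization.mk F v hv ∈ hypersurfacePts f ↔ eval v f = 0 := by
  obtain ⟨a, ha⟩ := Projectivization.exists_smul_eq_mk_rep F v hv
  rw [hypersurfacePts, Set.mem_ofPred_eq, ← ha, Units.smul_def, eval_smul_of_isHomogeneous hf,
    mul_eq_zero_iff_left (pow_ne_zero k a.ne_zero)]

theorem exists_eval_ne_zero_of_not_projPts_subset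
    {W : Submodule F (Fin n → F)} (hW : ¬ projPts W ⊆ hypersurfacePts f) :
    ∃ w ∈ W, eval w f ≠ 0 := by
  obtain ⟨P, hPW, hPf⟩ := Set.not_subset.1 hW
  exact ⟨P.rep, hPW (P.submodule_eq ▸ Submodule.mem_span_singleton_self _), hPf⟩

theorem card_zeros_eq [Fintype F] [DecidableEq F] (hf : f.IsHomogeneous k) (hk : k ≠ 0) :
    #{x | eval x f = 0} = (hypersurfacePts f).ncard * (Fintype.card F - 1) + 1 := by
  classical
  have hzero : (0 : Fin n → F) ∈ ({x | eval x f = 0} : Finset (Fin n → F)) := by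
    simpa [hk] using eval_smul_of_isHomogeneous hf 0 0
  rw [← Finset.card_erase_add_one hzero, add_left_inj,
    Set.ncard_eq_toFinset_card _ (Set.toFinite _), ← Fintype.card_units, ← Finset.card_univ,
    ← Finset.card_product]
  symm
  refine Finset.card_nbij (fun p => p.2 • p.1.rep) ?_ ?_ ?_
  · rintro ⟨P, a⟩ hP
    have hP : eval P.rep f = 0 := by simpa [hypersurfacePts] using hP
    simp [Units.smul_def, eval_smul_of_isHomogeneous hf, hP, P.rep_nonzero]
  · rintro ⟨P, a⟩ - ⟨P', a'⟩ - (h : a • P.rep = a' • P'.rep)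
    have hPP' : P = P' := by
      rw [← P.mk_rep, ← P'.mk_rep, Projectivization.mk_eq_mk_iff]
      exact ⟨a⁻¹ * a', by rw [mul_smul, ← h, inv_smul_smul]⟩
    subst hPP'
    exact Prod.ext rfl (Units.ext (smul_left_injective F P.rep_nonzero h))
  · intro v hv
    obtain ⟨hfv, hv0⟩ : eval v f = 0 ∧ v ≠ 0 := by simpa using hv
    obtain ⟨a, ha⟩ := Projectivization.exists_smul_eq_mk_rep F v hv0
    refine ⟨(Projectivization.mk F v hv0, a⁻¹), ?_, ?_⟩
    · simpa using (mk_mem_hypersurfacePts_iff hf hv0).2 hfv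
    · exact inv_smul_eq_iff.2 ha.symm

end HypersurfacePoints

section Univariate

variable {F : Type*} [Field F] [Fintype F]

theorem pow_eq_mul_of_forall_ne_zero {q : ℕ} (hF : Fintype.card F = q ^ 2) (hq : 3 ≤ q)
    {P : Polynomial F} (hP : P.natDegree ≤ q + 1) {c : F}
    (h : ∀ r ≠ 0, P.eval r ^ q = c * P.eval r) : P.eval 0 ^ q = c * P.eval 0 := by
  classical
  set R := frobeniusReduction q P - Polynomial.C c * P with hR
  have hdeg : R.natDegree < q ^ 2 - 1 := by
    refine (Polynomial.natDegree_sub_le_of_le (natDegree_frobeniusReduction_le q P)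
      ((Polynomial.natDegree_C_mul_le c P).trans hP)).trans_lt ?_
    obtain ⟨m, rfl⟩ := Nat.exists_eq_add_of_le hq
    rw [show 3 + m - 1 = m + 2 by omega]
    have hsq : (3 + m) ^ 2 = (3 + m) * (m + 2) + (3 + m) := by ring
    have hlin : (3 + m) * (m + 2) = (3 + m + 1) + (m ^ 2 + 4 * m + 2) := by ring
    omega
  have hR0 : R = 0 := by
    refine Polynomial.eq_zero_of_natDegree_lt_card_of_eval_eq_zero' R {0}ᶜ (fun r hr => ?_) ?_
    · simp [hR, eval_frobeniusReduction hF hP, h r (by simpa using hr)]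
    · rwa [Finset.card_compl, Finset.card_singleton, hF]
  have heval := congr_arg (Polynomial.eval 0) hR0
  rwa [hR, Polynomial.eval_sub, Polynomial.eval_mul, Polynomial.eval_C,
    eval_frobeniusReduction hF hP, Polynomial.eval_zero, sub_eq_zero] at heval

theorem natDegree_eq_zero_of_forall_pow_eq_one {P : Polynomial F} {k : ℕ} (hk : k ≠ 0)
    (hdeg : k * P.natDegree < Fintype.card F) (h : ∀ r, P.eval r ^ k = 1) : P.natDegree = 0 := by
  have hpow : P ^ k = 1 := by
    refine Polynomial.eq_of_natDegree_lt_card_of_eval_eq _ _ (f := (id : F → F))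
      Function.injective_id (fun r => by simpa using h r) ?_
    rw [Polynomial.natDegree_pow, Polynomial.natDegree_one]
    exact max_lt hdeg Fintype.card_pos
  simpa [hpow, hk] using Polynomial.natDegree_pow P k

end Univariate

section SplitCubics

variable {F : Type*} [Field F]

/-- Equations satisfied by the coefficients of a cubic `X³ + m X² + s X + g` which has three
distinct roots in the field with nine elements. They express part of the divisibility of `X⁹ - X`
by the cubic. -/
def SplitCubicRelations (m s g : F) : Prop :=
  m * (m ^ 6 + m ^ 2 * s ^ 2 - m ^ 3 * g - s ^ 3) = 0 ∧ (m = 0 → s ^ 4 = 1 ∧ g ^ 3 = s ^ 3 * g)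

variable [Fintype F]

theorem quadratic_eq_zero_of_cubic_eq_zero (hF : Fintype.card F = 3 ^ 2) {m s g t : F}
    (ht : t ^ 3 + m * t ^ 2 + s * t + g = 0) :
    m * (m ^ 6 + m ^ 2 * s ^ 2 - m ^ 3 * g - s ^ 3) * t ^ 2 +
      (m ^ 3 * (m ^ 3 * s - m ^ 2 * g + m * s ^ 2 - s * g) - s ^ 4 + 1) * t +
      (m ^ 3 * (m ^ 3 * g + m * s * g + g ^ 2) - s ^ 3 * g + g ^ 3) = 0 := by
  have h3 : (3 : F) = 0 := by exact_mod_cast cast_eq_zero_of_card_eq_sq hF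
  have t9 : t ^ 9 = t := by simpa [hF] using FiniteField.pow_card t
  have add_cube (x y : F) : (x + y) ^ 3 = x ^ 3 + y ^ 3 := add_pow_of_card_eq_sq hF x y
  have t3 : t ^ 3 = -(m * t ^ 2 + s * t + g) := by linear_combination ht
  have t4 : t ^ 4 = (m ^ 2 - s) * t ^ 2 + (m * s - g) * t + m * g := by
    linear_combination (t - m) * t3
  have t6 : t ^ 6 = (m ^ 4 + s ^ 2 + 2 * m * g) * t ^ 2 +
      (m ^ 3 * s - m ^ 2 * g + m * s ^ 2 - s * g) * t + (m ^ 3 * g + m * s * g + g ^ 2) := by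
    have t33 : t ^ 6 = (m * t ^ 2 + s * t + g) ^ 2 := by
      rw [← neg_sq, ← t3]
      ring
    linear_combination t33 + m ^ 2 * t4 + 2 * m * s * t3 -
      (m ^ 2 * s * t ^ 2 + m * s ^ 2 * t - s * g * t + m * s * g) * h3
  have t333 : t ^ 9 = -(m ^ 3 * t ^ 6 + s ^ 3 * t ^ 3 + g ^ 3) := by
    calc t ^ 9 = (t ^ 3) ^ 3 := by ring
      _ = -(m * t ^ 2 + s * t + g) ^ 3 := by rw [t3]; ring
      _ = _ := by rw [add_cube, add_cube]; ring
  linear_combination t333 - t9 - m ^ 3 * t6 - s ^ 3 * t3 - m ^ 4 * g * t ^ 2 * h3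

theorem splitCubicRelations_of_three_le_card [DecidableEq F] (hF : Fintype.card F = 3 ^ 2)
    {m s g : F} (h : 3 ≤ #{t : F | t ^ 3 + m * t ^ 2 + s * t + g = 0}) :
    SplitCubicRelations m s g := by
  set a₂ := m * (m ^ 6 + m ^ 2 * s ^ 2 - m ^ 3 * g - s ^ 3) with ha₂
  set a₁ := m ^ 3 * (m ^ 3 * s - m ^ 2 * g + m * s ^ 2 - s * g) - s ^ 4 + 1 with ha₁
  set a₀ := m ^ 3 * (m ^ 3 * g + m * s * g + g ^ 2) - s ^ 3 * g + g ^ 3 with ha₀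
  have hzero : Polynomial.C a₂ * Polynomial.X ^ 2 + Polynomial.C a₁ * Polynomial.X +
      Polynomial.C a₀ = 0 := by
    by_contra hne
    have hroots := card_eval_eq_zero_le hne Polynomial.natDegree_quadratic_le
    refine absurd (h.trans ((Finset.card_le_card fun t ht => ?_).trans hroots)) (by norm_num)
    simpa using quadratic_eq_zero_of_cubic_eq_zero hF (by simpa using ht)
  have h₂ : a₂ = 0 := by simpa using congr_arg (Polynomial.coeff · 2) hzero
  have h₁ : a₁ = 0 := by simpa using congr_arg (Polynomial.coeff · 1) hzero
  have h₀ : a₀ = 0 := by simpa using congr_arg (Polynomial.coeff · 0) hzero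
  refine ⟨h₂, ?_⟩
  rintro rfl
  exact ⟨by linear_combination -h₁, by linear_combination h₀⟩

theorem natDegree_eq_zero_of_splitCubicRelations (hF : Fintype.card F = 3 ^ 2)
    {M S G : Polynomial F} (hM : M.natDegree ≤ 1) (hS : S.natDegree ≤ 2) (hG : G.natDegree ≤ 3)
    (h : ∀ r, SplitCubicRelations (M.eval r) (S.eval r) (G.eval r)) : M.natDegree = 0 := by
  by_contra hM0
  set W := M ^ 6 + M ^ 2 * S ^ 2 - M ^ 3 * G - S ^ 3 with hW
  have hMW : M * W = 0 := by
    refine Polynomial.eq_zero_of_natDegree_lt_card_of_eval_eq_zero _ (f := (id : F → F))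
      Function.injective_id (fun r => by simpa [hW] using (h r).1) ?_
    have hM6 : (M ^ 6).natDegree ≤ 6 := Polynomial.natDegree_pow_le_of_le 6 hM
    have hM2S2 : (M ^ 2 * S ^ 2).natDegree ≤ 6 := Polynomial.natDegree_mul_le_of_le
      (Polynomial.natDegree_pow_le_of_le 2 hM) (Polynomial.natDegree_pow_le_of_le 2 hS)
    have hM3G : (M ^ 3 * G).natDegree ≤ 6 :=
      Polynomial.natDegree_mul_le_of_le (Polynomial.natDegree_pow_le_of_le 3 hM) hG
    have hS3 : (S ^ 3).natDegree ≤ 6 := Polynomial.natDegree_pow_le_of_le 3 hS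
    have hWdeg : W.natDegree ≤ 6 := Polynomial.natDegree_sub_le_of_le (n := 6)
      (Polynomial.natDegree_sub_le_of_le (n := 6)
        (Polynomial.natDegree_add_le_of_degree_le hM6 hM2S2) hM3G) hS3
    rw [hF]
    exact (Polynomial.natDegree_mul_le_of_le hM hWdeg).trans_lt (by norm_num)
  have hM_ne : M ≠ 0 := fun h0 => hM0 (h0 ▸ Polynomial.natDegree_zero)
  have hW0 : W = 0 := (mul_eq_zero.1 hMW).resolve_left hM_ne
  obtain ⟨r, hr⟩ : ∃ r, M.IsRoot r := Polynomial.exists_root_of_degree_eq_one <|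
    (Polynomial.degree_eq_iff_natDegree_eq hM_ne).2 (hM.antisymm (Nat.pos_of_ne_zero hM0))
  have hSr : S.eval r = 0 := by
    simpa [hW, hr.eq_zero] using congr_arg (Polynomial.eval r) hW0
  simpa [hSr] using ((h r).2 hr).1

theorem eq_zero_of_splitCubicRelations (hF : Fintype.card F = 3 ^ 2) {m : F} (hm : m ≠ 0)
    {S G : Polynomial F} (hS : S.natDegree ≤ 3) (hG : G.natDegree ≤ 6)
    (h : ∀ r, SplitCubicRelations m (S.eval r) (G.eval r)) :
    Polynomial.C (m ^ 6) + Polynomial.C (m ^ 2) * S ^ 2 - Polynomial.C (m ^ 3) * G -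
      frobeniusReduction 3 S = 0 := by
  refine Polynomial.eq_zero_of_natDegree_lt_card_of_eval_eq_zero _ (f := (id : F → F))
    Function.injective_id (fun r => ?_) ?_
  · simpa [hm, eval_frobeniusReduction hF (hS.trans (by norm_num))] using (h r).1
  have hS2 : (Polynomial.C (m ^ 2) * S ^ 2).natDegree ≤ 6 :=
    (Polynomial.natDegree_C_mul_le _ _).trans (Polynomial.natDegree_pow_le_of_le 2 hS)
  have hm3G : (Polynomial.C (m ^ 3) * G).natDegree ≤ 6 :=
    (Polynomial.natDegree_C_mul_le _ _).trans hG
  rw [hF]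
  exact (Polynomial.natDegree_sub_le_of_le (n := 6)
    (Polynomial.natDegree_sub_le_of_le (n := 6) (Polynomial.natDegree_add_le_of_degree_le
      ((Polynomial.natDegree_C _).trans_le (Nat.zero_le 6)) hS2) hm3G)
    (natDegree_frobeniusReduction_le 3 S)).trans_lt (by norm_num)

theorem coeff_four_eq_zero_of_splitCubicRelations (hF : Fintype.card F = 3 ^ 2) {m : F} (hm : m ≠ 0)
    {S G : Polynomial F} (hS : S.natDegree ≤ 3) (hG : G.natDegree ≤ 4)
    (h : ∀ r, SplitCubicRelations m (S.eval r) (G.eval r)) : G.coeff 4 = 0 := by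
  have h3 : (3 : F) = 0 := by exact_mod_cast cast_eq_zero_of_card_eq_sq hF
  have hcoeff {P : Polynomial F} {k i : ℕ} (hP : P.natDegree ≤ k) (hi : k < i) : P.coeff i = 0 :=
    Polynomial.coeff_eq_zero_of_natDegree_lt (hP.trans_lt hi)
  have hrel (i : ℕ) : (Polynomial.C (m ^ 6)).coeff i +
      m ^ 2 * ∑ p ∈ Finset.HasAntidiagonal.antidiagonal i, S.coeff p.1 * S.coeff p.2 -
      m ^ 3 * G.coeff i - (frobeniusReduction 3 S).coeff i = 0 := by
    rw [← Polynomial.coeff_mul, ← sq, ← Polynomial.coeff_C_mul, ← Polynomial.coeff_C_mul,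
      ← Polynomial.coeff_add, ← Polynomial.coeff_sub, ← Polynomial.coeff_sub,
      eq_zero_of_splitCubicRelations hF hm hS (hG.trans (by norm_num)) h, Polynomial.coeff_zero]
  have hfrob (i : ℕ) : (frobeniusReduction 3 S).coeff i = (if i = 0 then S.coeff 0 ^ 3 else 0) +
      (if i = 3 then S.coeff 1 ^ 3 else 0) + (if i = 6 then S.coeff 2 ^ 3 else 0) +
      if i = 1 then S.coeff 3 ^ 3 else 0 := by
    simp [-map_pow, frobeniusReduction, Finset.sum_range_succ, hcoeff hS, Polynomial.coeff_C,
      Polynomial.coeff_X, Polynomial.coeff_X_pow, eq_comm]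
  have coeff_six : m ^ 2 * (S.coeff 3 * S.coeff 3) - S.coeff 2 ^ 3 = 0 := by
    simpa [-map_pow, hfrob, Finset.Nat.antidiagonal_succ, hcoeff hS, hcoeff hG] using hrel 6
  have coeff_five : S.coeff 2 * S.coeff 3 + S.coeff 3 * S.coeff 2 = 0 := by
    simpa [-map_pow, hfrob, Finset.Nat.antidiagonal_succ, hcoeff hS, hcoeff hG, hm] using hrel 5
  have coeff_four : m ^ 2 * (S.coeff 1 * S.coeff 3 +
      (S.coeff 2 * S.coeff 2 + S.coeff 3 * S.coeff 1)) - m ^ 3 * G.coeff 4 = 0 := by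
    simpa [-map_pow, hfrob, Finset.Nat.antidiagonal_succ, hcoeff hS] using hrel 4
  have hS23 : S.coeff 2 * S.coeff 3 = 0 := by
    linear_combination S.coeff 2 * S.coeff 3 * h3 - coeff_five
  have hS3 : S.coeff 3 = 0 := by
    rcases mul_eq_zero.1 hS23 with hS2 | hS3
    · simpa [hS2, hm] using coeff_six
    · exact hS3
  have hS2 : S.coeff 2 = 0 := by simpa [hS3] using coeff_six
  simpa [hS3, hS2, hm] using coeff_four

end SplitCubics

section LinesThroughZero

variable {σ F : Type*} [Fintype σ] [Field F] {f : MvPolynomial σ F} {u : σ → F} {k : ℕ}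

/-- The linear form whose kernel is the tangent hyperplane at the zero `u` of `f`. -/
noncomputable def tangentForm (f : MvPolynomial σ F) (u : σ → F) : (σ → F) →ₗ[F] F :=
  ∑ i, eval u (pderiv i f) • LinearMap.proj i

theorem tangentForm_apply (f : MvPolynomial σ F) (u x : σ → F) :
    tangentForm f u x = eval u (dirDeriv x f) := by
  simp [tangentForm, eval_dirDeriv, mul_comm]

theorem tangentForm_ne_zero {i : σ} (hi : eval u (pderiv i f) ≠ 0) : tangentForm f u ≠ 0 := by
  classical
  intro h
  apply hi
  simpa [tangentForm_apply, eval_dirDeriv, Pi.single_apply] using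
    LinearMap.congr_fun h (Pi.single i 1)

theorem ne_zero_of_tangentForm_ne_zero (hf : f.IsHomogeneous (k + 2))
    (h : tangentForm f u ≠ 0) : u ≠ 0 := by
  rintro rfl
  exact h <| LinearMap.ext fun x => by
    simpa [tangentForm_apply] using eval_smul_of_isHomogeneous (isHomogeneous_dirDeriv hf x) 0 0

/-- The second polar of `u`: its value at `x` is the coefficient of `t²` in `f (x + t • u)`,
at least away from characteristic two. -/
noncomputable def secondPolar (u : σ → F) (f : MvPolynomial σ F) : MvPolynomial σ F :=
  C 2⁻¹ * dirDeriv u (dirDeriv u f)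

theorem isHomogeneous_secondPolar (hf : f.IsHomogeneous k) (u : σ → F) :
    (secondPolar u f).IsHomogeneous (k - 2) :=
  (isHomogeneous_dirDeriv (isHomogeneous_dirDeriv hf u) u).C_mul _

theorem coeff_two_lineRestriction (h2 : (2 : F) ≠ 0) (f : MvPolynomial σ F) (x u : σ → F) :
    (lineRestriction f x u).coeff 2 = eval x (secondPolar u f) := by
  rw [secondPolar, eval_mul, eval_C, ← two_mul_coeff_two_lineRestriction,
    inv_mul_cancel_left₀ h2]

theorem coeff_pred_lineRestriction (hf : f.IsHomogeneous (k + 1)) (x u : σ → F) :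
    (lineRestriction f x u).coeff k = tangentForm f u x := by
  rw [coeff_lineRestriction_comm hf x u rfl, coeff_one_lineRestriction, tangentForm_apply]

theorem natDegree_lineRestriction_le_of_tangentForm_eq_zero (hf : f.IsHomogeneous (k + 1))
    (hu : eval u f = 0) {x : σ → F} (hx : tangentForm f u x = 0) :
    (lineRestriction f x u).natDegree ≤ k - 1 :=
  Polynomial.natDegree_le_pred (natDegree_lineRestriction_le_of_eval_eq_zero hf hu x)
    ((coeff_pred_lineRestriction hf x u).trans hx)

theorem eval_add_smul_of_isHomogeneous_four (hf : f.IsHomogeneous 4) (h2 : (2 : F) ≠ 0)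
    (hu : eval u f = 0) (x : σ → F) (t : F) :
    eval (x + t • u) f = tangentForm f u x * t ^ 3 + eval x (secondPolar u f) * t ^ 2 +
      eval x (dirDeriv u f) * t + eval x f := by
  have hdeg := natDegree_lineRestriction_le_of_eval_eq_zero hf hu x
  rw [← eval_lineRestriction, Polynomial.eval_eq_sum_range' (Nat.lt_succ_of_le hdeg)]
  simp only [Nat.add_one_sub_one, Finset.sum_range_succ, Finset.range_zero, Finset.sum_empty,
    coeff_zero_lineRestriction, coeff_one_lineRestriction, coeff_two_lineRestriction h2,
    coeff_pred_lineRestriction hf]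
  ring

variable [Fintype F] [DecidableEq F]

theorem lineCount_le_of_tangentForm_ne_zero (hf : f.IsHomogeneous (k + 1)) (hu : eval u f = 0)
    {x : σ → F} (hx : tangentForm f u x ≠ 0) : lineCount f u x ≤ k := by
  refine lineCount_le (fun h => hx ?_) (natDegree_lineRestriction_le_of_eval_eq_zero hf hu x)
  rw [← coeff_pred_lineRestriction hf, h, Polynomial.coeff_zero]

variable [DecidableEq σ]

/-- The base points of the affine lines with direction `u` on which `f` vanishes identically. -/
noncomputable def ruling (f : MvPolynomial σ F) (u : σ → F) : Finset (σ → F) :=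
  {x | ∀ t : F, eval (x + t • u) f = 0}

/-- The points off the tangent hyperplane at `u`, normalised by `tangentForm f u x = 1`, for which
the line through `x` with direction `u` does not have three affine zeros. -/
noncomputable def irregular (f : MvPolynomial σ F) (u : σ → F) : Finset (σ → F) :=
  {x | tangentForm f u x = 1 ∧ lineCount f u x ≠ 3}

theorem lineCount_le_of_notMem_ruling (hf : f.IsHomogeneous (k + 1)) (hu : eval u f = 0)
    {x : σ → F} (hx : tangentForm f u x = 0) (hxr : x ∉ ruling f u) :
    lineCount f u x ≤ k - 1 := by
  refine lineCount_le (fun h => hxr ?_)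
    (natDegree_lineRestriction_le_of_tangentForm_eq_zero hf hu hx)
  simp [ruling, ← eval_lineRestriction, h]

theorem lineRestriction_eq_zero_of_mem_ruling (hf : f.IsHomogeneous k) (hk : k < Fintype.card F)
    {b : σ → F} (hb : b ∈ ruling f u) : lineRestriction f b u = 0 := by
  refine Polynomial.eq_zero_of_natDegree_lt_card_of_eval_eq_zero _ (f := (id : F → F))
    Function.injective_id (fun t => ?_) ((natDegree_lineRestriction_le hf b u).trans_lt hk)
  rw [eval_lineRestriction]
  exact (Finset.mem_filter_univ b).1 hb t

theorem tangentForm_eq_zero_of_mem_ruling (hf : f.IsHomogeneous (k + 1))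
    (hk : k + 1 < Fintype.card F) {b : σ → F} (hb : b ∈ ruling f u) : tangentForm f u b = 0 := by
  rw [← coeff_pred_lineRestriction hf, lineRestriction_eq_zero_of_mem_ruling hf hk hb,
    Polynomial.coeff_zero]

theorem eval_secondPolar_eq_zero_of_mem_ruling (h2 : (2 : F) ≠ 0) (hf : f.IsHomogeneous k)
    (hk : k < Fintype.card F) {b : σ → F} (hb : b ∈ ruling f u) :
    eval b (secondPolar u f) = 0 := by
  rw [← coeff_two_lineRestriction h2, lineRestriction_eq_zero_of_mem_ruling hf hk hb,
    Polynomial.coeff_zero]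

theorem eval_dirDeriv_eq_zero_of_mem_ruling (hf : f.IsHomogeneous k) (hk : k < Fintype.card F)
    {b : σ → F} (hb : b ∈ ruling f u) : eval b (dirDeriv u f) = 0 := by
  rw [← coeff_one_lineRestriction, lineRestriction_eq_zero_of_mem_ruling hf hk hb,
    Polynomial.coeff_zero]

theorem eval_smul_add_smul_eq_zero_of_mem_ruling (hf : f.IsHomogeneous (k + 1))
    (hu : eval u f = 0) {b : σ → F} (hb : b ∈ ruling f u) (r t : F) :
    eval (r • b + t • u) f = 0 := by
  rcases eq_or_ne r 0 with rfl | hr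
  · simp [eval_smul_of_isHomogeneous hf, hu]
  · have hrt : r • b + t • u = r • (b + (t / r) • u) := by
      rw [smul_add, smul_smul, mul_div_cancel₀ _ hr]
    rw [hrt, eval_smul_of_isHomogeneous hf, (Finset.mem_filter_univ b).1 hb, mul_zero]

theorem exists_eval_add_smul_add_smul_ne_zero (hf : f.IsHomogeneous (k + 1)) (hu : eval u f = 0)
    {b x : σ → F} (hb : b ∈ ruling f u) (h : ∃ w ∈ Submodule.span F {x, b, u}, eval w f ≠ 0) :
    ∃ r t : F, eval (x + r • b + t • u) f ≠ 0 := by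
  obtain ⟨w, hw, hfw⟩ := h
  obtain ⟨e, c, a, rfl⟩ := Submodule.mem_span_triple.1 hw
  have he : e ≠ 0 := by
    rintro rfl
    exact hfw (by simpa using eval_smul_add_smul_eq_zero_of_mem_ruling hf hu hb c a)
  refine ⟨c / e, a / e, fun h0 => hfw ?_⟩
  have hscale : e • x + c • b + a • u = e • (x + (c / e) • b + (a / e) • u) := by
    simp only [smul_add, smul_smul, mul_div_cancel₀ _ he]
  rw [hscale, eval_smul_of_isHomogeneous hf, h0, mul_zero]

theorem eval_eq_zero_of_mem_ruling {b : σ → F} (hb : b ∈ ruling f u) : eval b f = 0 := by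
  simpa using (Finset.mem_filter_univ b).1 hb 0

end LinesThroughZero

section NineElements

variable {F : Type*} [Field F] {f : MvPolynomial (Fin 5) F} {u : Fin 5 → F}

theorem finrank_ker_tangentForm (hL : tangentForm f u ≠ 0) :
    finrank F (LinearMap.ker (tangentForm f u)) = 4 := by
  have h := Module.Dual.finrank_ker_add_one_of_ne_zero hL
  rw [finrank_fin_fun] at h
  omega

variable [Fintype F]

theorem two_ne_zero_of_card_eq_nine (hF : Fintype.card F = 3 ^ 2) : (2 : F) ≠ 0 := by
  have h3 : (3 : F) = 0 := by exact_mod_cast cast_eq_zero_of_card_eq_sq hF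
  intro h2
  exact one_ne_zero (α := F) (by linear_combination h3 - h2)

theorem natCard_eq_nine_pow_finrank (hF : Fintype.card F = 3 ^ 2)
    (W : Submodule F (Fin 5 → F)) : Nat.card W = 9 ^ finrank F W := by
  rw [Module.natCard_eq_pow_finrank (K := F), Nat.card_eq_fintype_card, hF]
  norm_num

theorem natCard_span_le (hF : Fintype.card F = 3 ^ 2) (s : Finset (Fin 5 → F)) :
    Nat.card (Submodule.span F (s : Set (Fin 5 → F))) ≤ 9 ^ #s := by
  rw [natCard_eq_nine_pow_finrank hF]
  exact Nat.pow_le_pow_right (by norm_num) (finrank_span_finset_le_card s)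

theorem natCard_ker_tangentForm (hF : Fintype.card F = 3 ^ 2) (hL : tangentForm f u ≠ 0) :
    Nat.card (LinearMap.ker (tangentForm f u)) = 9 ^ 4 := by
  rw [natCard_eq_nine_pow_finrank hF, finrank_ker_tangentForm hL]

theorem exists_tangentForm_eq_one_notMem (hF : Fintype.card F = 3 ^ 2)
    (hL : tangentForm f u ≠ 0) {S : Finset (Fin 5 → F)} (hS : #S < 9 ^ 4) :
    ∃ x, tangentForm f u x = 1 ∧ x ∉ S := by
  classical
  rw [← natCard_ker_tangentForm hF hL, ← card_level_eq_card_ker hL 1] at hS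
  obtain ⟨x, hx, hxS⟩ := Finset.exists_mem_notMem_of_card_lt_card hS
  exact ⟨x, (Finset.mem_filter_univ x).1 hx, hxS⟩

variable [DecidableEq F]

theorem sum_lineCount_level_one_add_card_irregular_le (hF : Fintype.card F = 3 ^ 2)
    (hf : f.IsHomogeneous 4) (hu : eval u f = 0) (hL : tangentForm f u ≠ 0) :
    ∑ x with tangentForm f u x = 1, lineCount f u x + #(irregular f u) ≤ 3 * 9 ^ 4 := by
  have hpoint (x : Fin 5 → F) (hx : tangentForm f u x = 1) :
      lineCount f u x + (if lineCount f u x ≠ 3 then 1 else 0) ≤ 3 := by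
    have := lineCount_le_of_tangentForm_ne_zero hf hu (hx.trans_ne one_ne_zero)
    split_ifs <;> omega
  rw [irregular, ← Finset.filter_filter, Finset.card_filter, ← Finset.sum_add_distrib]
  refine (Finset.sum_le_sum fun x hx => hpoint x ((Finset.mem_filter_univ x).1 hx)).trans_eq ?_
  rw [Finset.sum_const, card_level_eq_card_ker hL, natCard_ker_tangentForm hF hL, smul_eq_mul,
    mul_comm]

theorem sum_lineCount_ker_le_add_card_ruling (hF : Fintype.card F = 3 ^ 2)
    (hf : f.IsHomogeneous 4) (hu : eval u f = 0) (hL : tangentForm f u ≠ 0) :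
    ∑ x with tangentForm f u x = 0, lineCount f u x ≤ 2 * 9 ^ 4 + 7 * #(ruling f u) := by
  have hpoint (x : Fin 5 → F) (hx : tangentForm f u x = 0) :
      lineCount f u x ≤ 2 + if x ∈ ruling f u then 7 else 0 := by
    split_ifs with hxr
    · exact (Finset.card_le_univ _).trans_eq hF
    · exact lineCount_le_of_notMem_ruling hf hu hx hxr
  calc ∑ x with tangentForm f u x = 0, lineCount f u x
      ≤ ∑ x with tangentForm f u x = 0, (2 + if x ∈ ruling f u then 7 else 0) :=
        Finset.sum_le_sum fun x hx => hpoint x ((Finset.mem_filter_univ x).1 hx)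
    _ = 2 * 9 ^ 4 + ∑ x with tangentForm f u x = 0, if x ∈ ruling f u then 7 else 0 := by
        rw [Finset.sum_add_distrib, Finset.sum_const, card_level_eq_card_ker hL,
          natCard_ker_tangentForm hF hL, smul_eq_mul, mul_comm]
    _ ≤ 2 * 9 ^ 4 + ∑ x, if x ∈ ruling f u then 7 else 0 :=
        Nat.add_le_add_left (Finset.sum_le_sum_of_subset (Finset.filter_subset _ _)) _
    _ = 2 * 9 ^ 4 + 7 * #(ruling f u) := by
        rw [Finset.sum_ite_mem, Finset.univ_inter, Finset.sum_const, smul_eq_mul, mul_comm 7]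

theorem nine_mul_card_zeros_eq (hF : Fintype.card F = 3 ^ 2) (hf : f.IsHomogeneous 4) :
    9 * #{x | eval x f = 0} = ∑ x with tangentForm f u x = 0, lineCount f u x +
      8 * ∑ x with tangentForm f u x = 1, lineCount f u x := by
  have h := sum_eq_sum_ker_add_mul_sum_level_one (tangentForm f u) (lineCount f u)
    fun r hr x => lineCount_smul hf u hr x
  rwa [sum_lineCount, hF] at h

theorem card_ruling_ge (hF : Fintype.card F = 3 ^ 2) (hf : f.IsHomogeneous 4) (hu : eval u f = 0)
    (hL : tangentForm f u ≠ 0) (hZ : 19521 ≤ #{x | eval x f = 0}) : 9 ^ 3 ≤ #(ruling f u) := by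
  have hsum := nine_mul_card_zeros_eq (u := u) hF hf
  have hker := sum_lineCount_ker_le_add_card_ruling hF hf hu hL
  have hlevel := sum_lineCount_level_one_add_card_irregular_le hF hf hu hL
  omega

end NineElements

section LinearIndependence

variable {F V : Type*} [Field F] [AddCommGroup V] [Module F V]

theorem finrank_span_triple {u b x : V} (hu : u ≠ 0)
    (hb : b ∉ Submodule.span F {u}) (hx : x ∉ Submodule.span F {b, u}) :
    finrank F (Submodule.span F {x, b, u}) = 3 := by
  have hli : LinearIndependent F ![x, b, u] := by
    refine linearIndependent_finCons.2 ⟨linearIndependent_finCons.2 ⟨?_, ?_⟩, ?_⟩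
    · exact LinearIndependent.of_subsingleton 0 hu
    · simpa using hb
    · simpa [Set.pair_comm] using hx
  have hrange : Set.range ![x, b, u] = {x, b, u} := by simp [Set.insert_comm, Set.pair_comm]
  rw [← hrange, finrank_span_eq_card hli, Fintype.card_fin]

theorem exists_le_finrank_eq {W : Submodule F V} {m : ℕ} (h : m ≤ finrank F W) :
    ∃ U ≤ W, finrank F U = m := by
  obtain ⟨b, hb⟩ := exists_linearIndependent_of_le_finrank h
  refine ⟨(Submodule.span F (Set.range b)).map W.subtype, Submodule.map_subtype_le _ _, ?_⟩
  rw [Submodule.finrank_map_subtype_eq, finrank_span_eq_card hb, Fintype.card_fin]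

end LinearIndependence

theorem exists_mem_eval_ne_zero_of_three_le_finrank {F σ : Type*} [Field F]
    {f : MvPolynomial σ F}
    (hplane : ∀ W : Submodule F (σ → F), finrank F W = 3 → ∃ w ∈ W, eval w f ≠ 0)
    {W : Submodule F (σ → F)} (hW : 3 ≤ finrank F W) : ∃ w ∈ W, eval w f ≠ 0 := by
  obtain ⟨U, hUW, hU⟩ := exists_le_finrank_eq hW
  obtain ⟨w, hw, hfw⟩ := hplane U hU
  exact ⟨w, hUW hw, hfw⟩

section NineElementsSpan

variable {F : Type*} [Field F] [Fintype F] [DecidableEq F] {f : MvPolynomial (Fin 5) F}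
  {u : Fin 5 → F}

theorem ruling_subset_ker (hF : Fintype.card F = 3 ^ 2) (hf : f.IsHomogeneous 4) :
    (ruling f u : Set (Fin 5 → F)) ⊆ LinearMap.ker (tangentForm f u) := fun _ hb =>
  tangentForm_eq_zero_of_mem_ruling hf (by rw [hF]; norm_num) hb

theorem span_ruling_eq_ker (hF : Fintype.card F = 3 ^ 2) (hf : f.IsHomogeneous 4)
    (hu : eval u f = 0) (hL : tangentForm f u ≠ 0) (hZ : 19521 ≤ #{x | eval x f = 0})
    (hplane : ∀ W : Submodule F (Fin 5 → F), finrank F W = 3 → ∃ w ∈ W, eval w f ≠ 0) :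
    Submodule.span F (ruling f u : Set (Fin 5 → F)) = LinearMap.ker (tangentForm f u) := by
  have hle := Submodule.span_le.2 (ruling_subset_ker (u := u) hF hf)
  set W := Submodule.span F (ruling f u : Set (Fin 5 → F))
  have hruling := card_ruling_ge hF hf hu hL hZ
  have hcard : #(ruling f u) ≤ 9 ^ finrank F W := by
    rw [← natCard_eq_nine_pow_finrank hF, ← Set.ncard_coe_finset]
    exact Set.ncard_le_ncard Submodule.subset_span (Set.toFinite _)
  have hrank : 3 ≤ finrank F W :=
    (Nat.pow_le_pow_iff_right (by norm_num)).1 (hruling.trans hcard)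
  have hrank' : finrank F W ≠ 3 := by
    intro h
    obtain ⟨w, hw, hfw⟩ := hplane W h
    have hWB : (ruling f u : Set (Fin 5 → F)) = W := by
      refine Set.eq_of_subset_of_ncard_le Submodule.subset_span ?_ (Set.toFinite _)
      rw [Set.ncard_coe_finset]
      exact (natCard_eq_nine_pow_finrank hF W).trans_le (h ▸ hruling)
    exact hfw (eval_eq_zero_of_mem_ruling (Finset.mem_coe.1 (hWB ▸ SetLike.mem_coe.2 hw)))
  refine Submodule.eq_of_le_of_finrank_le hle ?_
  rw [finrank_ker_tangentForm hL]
  omega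

theorem sum_lineCount_plane_le (hF : Fintype.card F = 3 ^ 2) (hf : f.IsHomogeneous 4)
    (hu : eval u f = 0) {b x : Fin 5 → F} (hb : b ∈ ruling f u) (hx : tangentForm f u x = 0)
    (hplane : ∃ w ∈ Submodule.span F {x, b, u}, eval w f ≠ 0) :
    ∑ r : F, lineCount f u (x + r • b) ≤ 3 * 3 ^ 2 := by
  have h2 := two_ne_zero_of_card_eq_nine hF
  have h4 : 4 < Fintype.card F := by rw [hF]; norm_num
  set A := lineRestriction (secondPolar u f) x b
  set B := lineRestriction (dirDeriv u f) x b
  set D := lineRestriction f x b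
  have hA : A.natDegree ≤ 1 := natDegree_lineRestriction_le_of_eval_eq_zero
    (isHomogeneous_secondPolar hf u) (eval_secondPolar_eq_zero_of_mem_ruling h2 hf h4 hb) x
  have hB : B.natDegree ≤ 2 := natDegree_lineRestriction_le_of_eval_eq_zero
    (isHomogeneous_dirDeriv hf u) (eval_dirDeriv_eq_zero_of_mem_ruling hf h4 hb) x
  have hD : D.natDegree ≤ 3 :=
    natDegree_lineRestriction_le_of_eval_eq_zero hf (eval_eq_zero_of_mem_ruling hb) x
  set P : Polynomial (Polynomial F) := Polynomial.C A * Polynomial.X ^ 2 +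
    Polynomial.C B * Polynomial.X + Polynomial.C D with hP
  have heval (r t : F) :
      (P.map (Polynomial.evalRingHom r)).eval t = eval (x + r • b + t • u) f := by
    have hLb := tangentForm_eq_zero_of_mem_ruling hf h4 hb
    rw [eval_add_smul_of_isHomogeneous_four hf h2 hu]
    simp [hP, A, B, D, eval_lineRestriction, hx, hLb]
  have hP0 : P ≠ 0 := by
    intro h0
    obtain ⟨r, t, hrt⟩ := exists_eval_add_smul_add_smul_ne_zero hf hu hb hplane
    exact hrt (by rw [← heval, h0, Polynomial.map_zero, Polynomial.eval_zero])
  have hdeg : P.leadingCoeff.natDegree + P.natDegree ≤ 3 := by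
    have hPdeg : P.natDegree ≤ 2 := Polynomial.natDegree_quadratic_le
    rw [Polynomial.leadingCoeff]
    interval_cases P.natDegree
    · simpa [hP] using hD
    · simpa [hP, Nat.lt_succ_iff] using hB
    · simpa [hP] using hA
  simpa only [lineCount, heval, hF] using sum_card_eval_map_eq_zero_le hP0 hdeg

theorem sum_lineCount_ker_le (hF : Fintype.card F = 3 ^ 2) (hf : f.IsHomogeneous 4)
    (hu : eval u f = 0) (hL : tangentForm f u ≠ 0) {b : Fin 5 → F} (hb : b ∈ ruling f u)
    (hbu : b ∉ Submodule.span F {u})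
    (hplane : ∀ W : Submodule F (Fin 5 → F), finrank F W = 3 → ∃ w ∈ W, eval w f ≠ 0) :
    ∑ x with tangentForm f u x = 0, lineCount f u x ≤ 20169 := by
  classical
  have hu0 : u ≠ 0 := ne_zero_of_tangentForm_ne_zero hf hL
  have hpoint (x : Fin 5 → F) (hx : tangentForm f u x = 0) :
      ∑ r : F, lineCount f u (x + r • b) ≤
        27 + if x ∈ Submodule.span F {b, u} then 54 else 0 := by
    split_ifs with hspan
    · refine (Finset.sum_le_card_nsmul _ _ 9 fun r _ => ?_).trans_eq ?_
      · exact (Finset.card_le_univ _).trans_eq hF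
      · rw [Finset.card_univ, hF]
        norm_num
    · exact sum_lineCount_plane_le hF hf hu hb hx
        (hplane _ (finrank_span_triple hu0 hbu hspan))
  have hspan_card : #{x | x ∈ Submodule.span F {b, u}} ≤ 9 ^ 2 :=
    calc #{x | x ∈ Submodule.span F {b, u}} = Nat.card (Submodule.span F {b, u}) :=
          (Nat.subtype_card _ fun x => by simp).symm
      _ ≤ 9 ^ #{b, u} := by simpa using natCard_span_le hF {b, u}
      _ ≤ 9 ^ 2 := Nat.pow_le_pow_right (by norm_num) Finset.card_le_two
  have hLb : tangentForm f u b = 0 := ruling_subset_ker hF hf hb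
  have htotal : 9 * ∑ x with tangentForm f u x = 0, lineCount f u x ≤ 27 * 9 ^ 4 + 54 * 9 ^ 2 :=
    calc 9 * ∑ x with tangentForm f u x = 0, lineCount f u x
        = ∑ x with tangentForm f u x = 0, ∑ r : F, lineCount f u (x + r • b) := by
          rw [sum_sum_add_smul (lineCount f u) fun r x => by simp [hLb], hF]
          norm_num
      _ ≤ ∑ x with tangentForm f u x = 0,
            (27 + if x ∈ Submodule.span F {b, u} then 54 else 0) :=
          Finset.sum_le_sum fun x hx => hpoint x ((Finset.mem_filter_univ x).1 hx)
      _ ≤ 27 * 9 ^ 4 + ∑ x, if x ∈ Submodule.span F {b, u} then 54 else 0 := by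
          rw [Finset.sum_add_distrib, Finset.sum_const, card_level_eq_card_ker hL,
            natCard_ker_tangentForm hF hL, smul_eq_mul, mul_comm]
          exact Nat.add_le_add_left (Finset.sum_le_sum_of_subset (Finset.filter_subset _ _)) _
      _ ≤ 27 * 9 ^ 4 + 54 * 9 ^ 2 := by
          rw [← Finset.sum_filter, Finset.sum_const, smul_eq_mul, mul_comm _ 54]
          exact Nat.add_le_add_left (Nat.mul_le_mul_left 54 hspan_card) _
  omega

theorem card_irregular_le (hF : Fintype.card F = 3 ^ 2) (hf : f.IsHomogeneous 4)
    (hu : eval u f = 0) (hL : tangentForm f u ≠ 0) (hZ : 19521 ≤ #{x | eval x f = 0})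
    (hplane : ∀ W : Submodule F (Fin 5 → F), finrank F W = 3 → ∃ w ∈ W, eval w f ≠ 0) :
    #(irregular f u) ≤ 243 := by
  obtain ⟨b, hb, hbu⟩ : ∃ b ∈ ruling f u, b ∉ Submodule.span F {u} := by
    by_contra! h
    have hsubset : (ruling f u : Set (Fin 5 → F)) ⊆ Submodule.span F {u} := h
    have hcard := Set.ncard_le_ncard hsubset (Set.toFinite _)
    rw [Set.ncard_coe_finset] at hcard
    have hspan : Nat.card (Submodule.span F {u}) ≤ 9 ^ 1 := by
      simpa using natCard_span_le hF {u}
    exact absurd (((card_ruling_ge hF hf hu hL hZ).trans hcard).trans hspan) (by norm_num)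
  have hsum := nine_mul_card_zeros_eq (u := u) hF hf
  have hker := sum_lineCount_ker_le hF hf hu hL hb hbu hplane
  have hlevel := sum_lineCount_level_one_add_card_irregular_le hF hf hu hL
  omega

end NineElementsSpan

section TranslationInvariance

variable {F σ : Type*} [Field F] [Fintype F] [Finite σ] {φ : MvPolynomial σ F} {k m : ℕ}
  {L : (σ → F) →ₗ[F] F}

theorem eval_add_eq_of_forall_notMem (hφ : φ.IsHomogeneous (k + 1))
    (hk : k + 1 + m < Fintype.card F) {S : Finset (σ → F)}
    (hS : (Fintype.card F - 1) * #S < (m + 1) * Nat.card (LinearMap.ker L)) {b : σ → F}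
    (h : ∀ x, L x = 1 → x ∉ S → eval (x + b) φ = eval x φ) {x : σ → F} (hx : L x = 1) :
    eval (x + b) φ = eval x φ := by
  classical
  obtain ⟨d, hd, hfew⟩ := exists_direction_few_hits (LinearMap.ker L) S x hS
  set R := lineRestriction φ (x + b) d - lineRestriction φ x d with hR
  have hdeg : R.natDegree ≤ k := by
    refine Polynomial.natDegree_le_pred (n := k + 1) ?_ ?_
    · simpa using Polynomial.natDegree_sub_le_of_le (natDegree_lineRestriction_le hφ (x + b) d)
        (natDegree_lineRestriction_le hφ x d)
    · simp only [hR, Polynomial.coeff_sub, coeff_top_lineRestriction hφ, sub_self]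
  have hzero (r : F) (hr : x + r • d ∉ S) : R.eval r = 0 := by
    have hLr : L (x + r • d) = 1 := by simp [hx, LinearMap.mem_ker.1 hd]
    simp only [hR, Polynomial.eval_sub, eval_lineRestriction]
    rw [add_right_comm, h _ hLr hr, sub_self]
  have hR0 : R = 0 := by
    refine Polynomial.eq_zero_of_natDegree_lt_card_of_eval_eq_zero' R
      (insert 0 ({r : F | r ≠ 0 ∧ x + r • d ∈ S} : Finset F))ᶜ
      (fun r hr => hzero r ?_) (hdeg.trans_lt ?_)
    · simp only [Finset.mem_compl, Finset.mem_insert, Finset.mem_filter_univ, not_or,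
        not_and] at hr
      exact hr.2 hr.1
    · have := Finset.card_insert_le (0 : F) {r : F | r ≠ 0 ∧ x + r • d ∈ S}
      rw [Finset.card_compl]
      omega
  have heval := congr_arg (Polynomial.eval 0) hR0
  simpa [hR, eval_lineRestriction, sub_eq_zero] using heval

theorem eval_eq_of_forall_notMem_strip [DecidableEq (σ → F)] (hφ : φ.IsHomogeneous (k + 1))
    (hk : k + 1 + m < Fintype.card F) {E : Finset (σ → F)}
    (hE : (Fintype.card F - 1) * (Fintype.card F * #E) < (m + 1) * Nat.card (LinearMap.ker L))
    {B : Set (σ → F)} (hB : Submodule.span F B = LinearMap.ker L)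
    (h : ∀ b ∈ B, ∀ x, L x = 1 → x ∉ strip F E b → ∀ r : F, eval (x + r • b) φ = eval x φ)
    {x y : σ → F} (hx : L x = 1) (hy : L y = 1) : eval y φ = eval x φ := by
  have hinvariant : ∀ d ∈ Submodule.span F B, ∀ z, L z = 1 → eval (z + d) φ = eval z φ := by
    intro d hd
    induction hd using Submodule.closure_induction with
    | zero => simp
    | add d e hd he ihd ihe =>
      intro z hz
      rw [hB, LinearMap.mem_ker] at hd
      rw [← add_assoc, ihe _ (by rw [map_add, hz, hd, add_zero]), ihd z hz]
    | smul_mem r b hb =>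
      intro z hz
      exact eval_add_eq_of_forall_notMem hφ hk
        ((Nat.mul_le_mul_left _ (card_strip_le E b)).trans_lt hE)
        (fun x hx hxb => h b hb x hx hxb r) hz
  have hdiff : y - x ∈ Submodule.span F B := by simp [hB, hx, hy]
  simpa using hinvariant _ hdiff x hx

end TranslationInvariance

section CubeRelation

variable {F σ : Type*} [Field F] [Fintype F] [Finite σ] {f : MvPolynomial σ F} {q : ℕ}
  {L : (σ → F) →ₗ[F] F} {S : Finset (σ → F)} {c : F}

theorem eval_pow_eq_mul_of_apply_eq_one (hF : Fintype.card F = q ^ 2) (hq : 3 ≤ q)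
    (hf : f.IsHomogeneous (q + 1))
    (hS : (Fintype.card F - 1) * #S < Nat.card (LinearMap.ker L))
    (h : ∀ x, L x = 1 → x ∉ S → eval x f ^ q = c * eval x f) {x : σ → F} (hx : L x = 1) :
    eval x f ^ q = c * eval x f := by
  classical
  obtain ⟨d, hd, hmiss⟩ := exists_direction_few_hits (m := 0) (LinearMap.ker L) S x
    (by rwa [zero_add, one_mul])
  have hnotMem (r : F) (hr : r ≠ 0) : x + r • d ∉ S := by
    simpa [hr] using Finset.filter_eq_empty_iff.1 (Finset.card_eq_zero.1 (Nat.le_zero.1 hmiss))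
      (Finset.mem_univ r)
  have hline := pow_eq_mul_of_forall_ne_zero hF hq (natDegree_lineRestriction_le hf x d)
    (c := c) fun r hr => by
      rw [eval_lineRestriction]
      exact h _ (by simp [hx, LinearMap.mem_ker.1 hd]) (hnotMem r hr)
  simpa [eval_lineRestriction] using hline

theorem eval_pow_eq_mul_of_forall_notMem (hF : Fintype.card F = q ^ 2) (hq : 3 ≤ q)
    (hf : f.IsHomogeneous (q + 1)) (hL : L ≠ 0)
    (hS : (Fintype.card F - 1) * #S < Nat.card (LinearMap.ker L))
    (h : ∀ x, L x = 1 → x ∉ S → eval x f ^ q = c * eval x f) (x : σ → F) :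
    eval x f ^ q = c * eval x f := by
  have hne (x : σ → F) (hx : L x ≠ 0) : eval x f ^ q = c * eval x f := by
    have hnorm : (L x ^ (q + 1)) ^ q = L x ^ (q + 1) := by
      rw [← pow_mul, add_one_mul, ← sq, ← hF, pow_add, FiniteField.pow_card, pow_succ']
    have hone := eval_pow_eq_mul_of_apply_eq_one hF hq hf hS h
      (x := (L x)⁻¹ • x) (by simp [hx])
    have hscale : eval x f = L x ^ (q + 1) * eval ((L x)⁻¹ • x) f := by
      rw [← eval_smul_of_isHomogeneous hf, smul_inv_smul₀ hx]
    rw [hscale, mul_pow, hnorm, hone, mul_left_comm]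
  by_cases hx : L x = 0
  · obtain ⟨y, hy⟩ : ∃ y, L y ≠ 0 := by
      by_contra! hzero
      exact hL (LinearMap.ext hzero)
    have hline := pow_eq_mul_of_forall_ne_zero hF hq (natDegree_lineRestriction_le hf x y)
      (c := c) fun r hr => by
        rw [eval_lineRestriction]
        exact hne _ (by simp [hx, hr, hy])
    simpa [eval_lineRestriction] using hline
  · exact hne x hx

end CubeRelation

section TangentNormalForm

variable {F : Type*} [Field F] [Fintype F] [DecidableEq F] {f : MvPolynomial (Fin 5) F}
  {u : Fin 5 → F}

theorem splitCubicRelations_of_notMem_irregular (hF : Fintype.card F = 3 ^ 2)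
    (hf : f.IsHomogeneous 4) (hu : eval u f = 0) {x : Fin 5 → F} (hx : tangentForm f u x = 1)
    (hxE : x ∉ irregular f u) :
    SplitCubicRelations (eval x (secondPolar u f)) (eval x (dirDeriv u f)) (eval x f) := by
  refine splitCubicRelations_of_three_le_card hF (le_of_eq ?_)
  have hcount : lineCount f u x = 3 := by simpa [irregular, hx] using hxE
  simpa only [lineCount, eval_add_smul_of_isHomogeneous_four hf
    (two_ne_zero_of_card_eq_nine hF) hu, hx, one_mul] using hcount.symm

theorem splitCubicRelations_of_notMem_strip (hF : Fintype.card F = 3 ^ 2)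
    (hf : f.IsHomogeneous 4) (hu : eval u f = 0) {x d : Fin 5 → F} (hx : tangentForm f u x = 1)
    (hd : tangentForm f u d = 0) (hxd : x ∉ strip F (irregular f u) d) (r : F) :
    SplitCubicRelations ((lineRestriction (secondPolar u f) x d).eval r)
      ((lineRestriction (dirDeriv u f) x d).eval r) ((lineRestriction f x d).eval r) := by
  simp only [eval_lineRestriction]
  exact splitCubicRelations_of_notMem_irregular hF hf hu (by simp [hx, hd])
    (add_smul_notMem_of_notMem_strip hxd r)

theorem eval_secondPolar_eq_of_tangentForm_eq_one (hF : Fintype.card F = 3 ^ 2)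
    (hf : f.IsHomogeneous 4) (hu : eval u f = 0) (hL : tangentForm f u ≠ 0)
    (hE : #(irregular f u) ≤ 243)
    (hspan : Submodule.span F (ruling f u : Set (Fin 5 → F)) = LinearMap.ker (tangentForm f u))
    {x y : Fin 5 → F} (hx : tangentForm f u x = 1) (hy : tangentForm f u y = 1) :
    eval y (secondPolar u f) = eval x (secondPolar u f) := by
  have h4 : 4 < Fintype.card F := by rw [hF]; norm_num
  refine eval_eq_of_forall_notMem_strip (m := 2) (isHomogeneous_secondPolar hf u)
    (by rw [hF]; norm_num) (E := irregular f u) ?_ hspan ?_ hx hy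
  · rw [natCard_ker_tangentForm hF hL, hF]
    omega
  · intro b hb z hz hzb r
    refine eval_add_smul_eq_of_natDegree_lineRestriction_eq_zero
      (natDegree_eq_zero_of_splitCubicRelations hF ?_ ?_ ?_
        (splitCubicRelations_of_notMem_strip hF hf hu hz
          (tangentForm_eq_zero_of_mem_ruling hf h4 hb) hzb)) r
    · exact natDegree_lineRestriction_le_of_eval_eq_zero (isHomogeneous_secondPolar hf u)
        (eval_secondPolar_eq_zero_of_mem_ruling (two_ne_zero_of_card_eq_nine hF) hf h4 hb) z
    · exact natDegree_lineRestriction_le_of_eval_eq_zero (isHomogeneous_dirDeriv hf u)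
        (eval_dirDeriv_eq_zero_of_mem_ruling hf h4 hb) z
    · exact natDegree_lineRestriction_le_of_eval_eq_zero hf (eval_eq_zero_of_mem_ruling hb) z

theorem eval_secondPolar_eq_zero_of_tangentForm_eq_one (hF : Fintype.card F = 3 ^ 2)
    (hf : f.IsHomogeneous 4) (hu : eval u f = 0) (hE : #(irregular f u) ≤ 243)
    (hspan : Submodule.span F (ruling f u : Set (Fin 5 → F)) = LinearMap.ker (tangentForm f u))
    (hker : ∃ d ∈ LinearMap.ker (tangentForm f u), eval d f ≠ 0)
    {x : Fin 5 → F} (hx : tangentForm f u x = 1) : eval x (secondPolar u f) = 0 := by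
  have hL : tangentForm f u ≠ 0 := fun h => by simp [h] at hx
  obtain ⟨d, hd, hfd⟩ := hker
  rw [LinearMap.mem_ker] at hd
  have hstrip : #(strip F (irregular f u) d) < 9 ^ 4 := by
    have := card_strip_le (F := F) (irregular f u) d
    rw [hF] at this
    omega
  obtain ⟨y, hy, hyd⟩ := exists_tangentForm_eq_one_notMem hF hL hstrip
  have hconst (r : F) : eval (y + r • d) (secondPolar u f) = eval x (secondPolar u f) :=
    eval_secondPolar_eq_of_tangentForm_eq_one hF hf hu hL hE hspan hx (by simp [hy, hd])
  by_contra hm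
  refine hfd ?_
  rw [← coeff_top_lineRestriction hf y d]
  refine coeff_four_eq_zero_of_splitCubicRelations hF hm
    (natDegree_lineRestriction_le (isHomogeneous_dirDeriv hf u) y d)
    (natDegree_lineRestriction_le hf y d) fun r => ?_
  rw [← hconst r, ← eval_lineRestriction]
  exact splitCubicRelations_of_notMem_strip hF hf hu hy hd hyd r

theorem eval_dirDeriv_eq_of_tangentForm_eq_one (hF : Fintype.card F = 3 ^ 2)
    (hf : f.IsHomogeneous 4) (hu : eval u f = 0) (hE : #(irregular f u) ≤ 243)
    (hspan : Submodule.span F (ruling f u : Set (Fin 5 → F)) = LinearMap.ker (tangentForm f u))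
    (hpolar : ∀ x, tangentForm f u x = 1 → eval x (secondPolar u f) = 0)
    {x y : Fin 5 → F} (hx : tangentForm f u x = 1) (hy : tangentForm f u y = 1) :
    eval y (dirDeriv u f) = eval x (dirDeriv u f) := by
  have h4 : 4 < Fintype.card F := by rw [hF]; norm_num
  have hL : tangentForm f u ≠ 0 := fun h => by simp [h] at hx
  refine eval_eq_of_forall_notMem_strip (m := 2) (isHomogeneous_dirDeriv hf u)
    (by rw [hF]; norm_num) (E := irregular f u) ?_ hspan ?_ hx hy
  · rw [natCard_ker_tangentForm hF hL, hF]
    omega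
  intro b hb z hz hzb r
  have hLb := tangentForm_eq_zero_of_mem_ruling hf h4 hb
  have hdeg := natDegree_lineRestriction_le_of_eval_eq_zero (isHomogeneous_dirDeriv hf u)
    (eval_dirDeriv_eq_zero_of_mem_ruling hf h4 hb) z
  refine eval_add_smul_eq_of_natDegree_lineRestriction_eq_zero
    (natDegree_eq_zero_of_forall_pow_eq_one four_ne_zero (by omega) fun t => ?_) r
  refine ((splitCubicRelations_of_notMem_strip hF hf hu hz hLb hzb t).2 ?_).1
  rw [eval_lineRestriction, hpolar _ (by simp [hz, hLb])]

theorem exists_forall_eval_pow_three_eq_mul (hF : Fintype.card F = 3 ^ 2)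
    (hf : f.IsHomogeneous 4) (hu : eval u f = 0) (hL : tangentForm f u ≠ 0)
    (hE : #(irregular f u) ≤ 243)
    (hspan : Submodule.span F (ruling f u : Set (Fin 5 → F)) = LinearMap.ker (tangentForm f u))
    (hker : ∃ d ∈ LinearMap.ker (tangentForm f u), eval d f ≠ 0) :
    ∃ c : F, ∀ x, eval x f ^ 3 = c * eval x f := by
  have hpolar (x : Fin 5 → F) (hx : tangentForm f u x = 1) : eval x (secondPolar u f) = 0 :=
    eval_secondPolar_eq_zero_of_tangentForm_eq_one hF hf hu hE hspan hker hx
  obtain ⟨x₀, hx₀, -⟩ := exists_tangentForm_eq_one_notMem hF hL (S := ∅) (by norm_num)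
  refine ⟨eval x₀ (dirDeriv u f) ^ 3, eval_pow_eq_mul_of_forall_notMem hF le_rfl hf hL
    (S := irregular f u) ?_ fun x hx hxE => ?_⟩
  · rw [natCard_ker_tangentForm hF hL, hF]
    omega
  · rw [((splitCubicRelations_of_notMem_irregular hF hf hu hx hxE).2 (hpolar x hx)).2,
      eval_dirDeriv_eq_of_tangentForm_eq_one hF hf hu hE hspan hpolar hx₀ hx]

theorem exists_eval_eq_zero_tangentForm_ne_zero (hF : Fintype.card F = 3 ^ 2)
    (hf : f.IsHomogeneous 4) (hZ : 19521 ≤ #{x | eval x f = 0}) {v : Fin 5 → F}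
    (hv : eval v f ≠ 0) : ∃ u, eval u f = 0 ∧ tangentForm f u ≠ 0 := by
  by_contra! hsing
  have hcount := two_mul_card_zeros_le_of_forall_singular hf hv fun u hu i => by
    by_contra hi
    exact tangentForm_ne_zero hi (hsing u hu)
  rw [hF, Fintype.card_fin] at hcount
  omega

end TangentNormalForm

section HermitianVariety

variable {F : Type} [Field F] [Fintype F] {n q : ℕ} {f : MvPolynomial (Fin n) F}

theorem isNonsingularHermitian_of_forall_pow_eq_mul [DecidableEq F]
    (hF : Fintype.card F = q ^ 2) (hn : 5 ≤ n)
    (hf : f.IsHomogeneous (q + 1)) {c : F} (h : ∀ x, eval x f ^ q = c * eval x f)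
    (hZ : q ^ 2 < #{x | eval x f = 0})
    (hplane : ∀ W : Submodule F (Fin n → F), finrank F W = 3 → ∃ w ∈ W, eval w f ≠ 0) :
    IsNonsingularHermitian q (hypersurfacePts f) := by
  obtain ⟨v, -, hv⟩ := exists_mem_eval_ne_zero_of_three_le_finrank hplane (W := ⊤)
    (by rw [finrank_top, finrank_fin_fun]; omega)
  have hc : c ≠ 0 := left_ne_zero_of_mul (h v ▸ pow_ne_zero q hv)
  obtain ⟨M, hM, hMf⟩ := exists_hermitian_matrix hF (hf.C_mul (eval v f)⁻¹) fun x => by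
    rw [eval_mul, eval_C, mul_pow, inv_pow, h, h, mul_inv, mul_mul_mul_comm, inv_mul_cancel₀ hc,
      one_mul]
  have hzero (x : Fin n → F) : ∑ i, ∑ j, x i * M i j * x j ^ q = 0 ↔ eval x f = 0 := by
    rw [← hMf, eval_mul, eval_C, mul_eq_zero_iff_left (inv_ne_zero hv)]
  refine ⟨M, isUnit_det_of_no_totally_isotropic hF hM (by simpa using hn) ?_ ?_, hM, ?_⟩
  · simpa only [hermitianForm_apply, hzero, ← Set.ncard_coe_finset, Finset.coe_filter_univ]
      using hZ
  · rintro ⟨W, hW, hWf⟩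
    obtain ⟨w, hw, hfw⟩ := hplane W hW
    exact hfw ((hzero w).1 (by rw [← hermitianForm_apply hF, hWf w hw]))
  · exact Set.ext fun P => (hzero P.rep).symm

end HermitianVariety

theorem stmt_15_general (F : Type) [Field F] [Fintype F] (hcardF : Fintype.card F = 9)
    (f : MvPolynomial (Fin 5) F) (hf : f.IsHomogeneous 4)
    (hnoplane : ¬ ∃ W : Submodule F (Fin 5 → F),
      finrank F W = 3 ∧ projPts W ⊆ hypersurfacePts f)
    (hcard : 3 ^ 7 + 3 ^ 5 + 3 ^ 2 + 1 ≤ (hypersurfacePts f).ncard) :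
    IsNonsingularHermitian 3 (hypersurfacePts f) := by
  classical
  have hF : Fintype.card F = 3 ^ 2 := hcardF
  have hplane (W : Submodule F (Fin 5 → F)) (hW : finrank F W = 3) : ∃ w ∈ W, eval w f ≠ 0 :=
    exists_eval_ne_zero_of_not_projPts_subset fun h => hnoplane ⟨W, hW, h⟩
  have hZ : 19521 ≤ #{x | eval x f = 0} := by
    rw [card_zeros_eq hf four_ne_zero, hcardF]
    omega
  obtain ⟨v, -, hv⟩ := exists_mem_eval_ne_zero_of_three_le_finrank hplane (W := ⊤) (by simp)
  obtain ⟨u, hu, hL⟩ := exists_eval_eq_zero_tangentForm_ne_zero hF hf hZ hv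
  obtain ⟨c, hc⟩ := exists_forall_eval_pow_three_eq_mul hF hf hu hL
    (card_irregular_le hF hf hu hL hZ hplane) (span_ruling_eq_ker hF hf hu hL hZ hplane)
    (exists_mem_eval_ne_zero_of_three_le_finrank hplane (by simp [finrank_ker_tangentForm hL]))
  exact isNonsingularHermitian_of_forall_pow_eq_mul hF le_rfl hf hc (by omega) hplane

/-- If `X` is a hypersurface of `PG(4,9)` of degree `4` defined over `GF(9)`, containing
no plane, with `3⁷ + 3⁵ + 3² + 1` rational points, and some plane meets `X` in exactly
`3² + 1 = 10` rational points, then `X` is a non-singular Hermitian variety `H(4,9)`. -/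
theorem stmt_15 (F : Type) [Field F] [Fintype F] (hcardF : Fintype.card F = 9)
    (f : MvPolynomial (Fin 5) F) (hf0 : f ≠ 0) (hfdeg : f.IsHomogeneous 4)
    (X : Set (Projectivization F (Fin 5 → F))) (hX : X = hypersurfacePts f)
    (hnoplane : ¬ ∃ W : Submodule F (Fin 5 → F), Module.finrank F W = 3 ∧ projPts W ⊆ X)
    (hcardX : X.ncard = 3 ^ 7 + 3 ^ 5 + 3 ^ 2 + 1)
    (hplane : ∃ W : Submodule F (Fin 5 → F), Module.finrank F W = 3 ∧
      (X ∩ projPts W).ncard = 10) :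
    IsNonsingularHermitian 3 X := by
  subst hX
  exact stmt_15_general F hcardF f hfdeg hnoplane hcardX.ge
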